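/- Let γ ≥ 1 and n be integers with n ≥ 3γ + 2. For every connected nonbipartite graph G of order n with domination number γ, one has q_min(C*_{3,3γ−3}) ≤ q_min(G), where C*_{3,3γ−3} has order n, and equality holds if and only if G is isomorphic to C*_{3,3γ−3}. -/

import Mathlib

open scoped Classical

/-- `D` is a dominating set of `G`: every vertex not in `D` is adjacent to a vertex of `D`. -/
def IsDominatingSet {V : Type*} [Fintype V] (G : SimpleGraph V) (D : Finset V) : Prop :=
  ∀ v, v ∉ D → ∃ u ∈ D, G.Adj u v

/-- The domination number of `G`: minimum cardinality of a dominating set. -/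
noncomputable def dominationNumber {V : Type*} [Fintype V] (G : SimpleGraph V) : ℕ :=
  sInf {k | ∃ D : Finset V, IsDominatingSet G D ∧ D.card = k}

/-- Edge relation for the graph `C*_{s,l}` on vertex indices `0, …, n-1`:
vertices `0, …, s-1` form a cycle `C_s` (with `0` playing the role of `v_1`);
vertices `0, s, s+1, …, s+l-1` form a path of length `l` hanging at `0`;
and all remaining vertices `s+l, …, n-1` are pendant vertices attached to the
other end of the path (to `0` itself when `l = 0`). -/
def cstarRel (s l : ℕ) (a b : ℕ) : Prop :=
  (b = a + 1 ∧ a + 1 < s) ∨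
  (a = 0 ∧ b = s - 1) ∨
  (1 ≤ l ∧ a = 0 ∧ b = s) ∨
  (b = a + 1 ∧ s ≤ a ∧ a + 1 < s + l) ∨
  (a = (if l = 0 then 0 else s + l - 1) ∧ s + l ≤ b)

/-- The graph `C*_{s,l}` of order `n`: a cycle `C_s` with a path of length `l`
attached, and `n - s - l` pendant edges attached at the far end of the path. -/
def Cstar (n s l : ℕ) : SimpleGraph (Fin n) :=
  SimpleGraph.fromRel (fun i j => cstarRel s l i.val j.val)

/-- The signless Laplacian matrix `Q(G) = D(G) + A(G)` of a finite simple graph. -/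
noncomputable def signlessLaplacian {V : Type*} [Fintype V] (G : SimpleGraph V) :
    Matrix V V ℝ :=
  fun i j => (if i = j then (G.degree i : ℝ) else 0) + (if G.Adj i j then 1 else 0)

/-- The least eigenvalue of the signless Laplacian of `G`. -/
noncomputable def qmin {V : Type*} [Fintype V] (G : SimpleGraph V) : ℝ :=
  sInf {μ : ℝ | ∃ x : V → ℝ, x ≠ 0 ∧ (signlessLaplacian G).mulVec x = μ • x}


/-! ### Combinatorial inequalities on `ℕ`-indexed data -/

/-- Abstract covering inequality. -/
lemma cover_le {ι : Type*} (R : Finset ι) (I : Finset ℕ) (S : ι → Finset ℕ) (w : ι → ℝ)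
    (b : ℕ → ℝ) (hb : ∀ k, 0 ≤ b k) (_hw : ∀ p ∈ R, ∑ k ∈ S p, b k ≤ w p)
    (hc : ∀ k ∈ I, ∃ p ∈ R, k ∈ S p) : ∑ k ∈ I, b k ≤ ∑ p ∈ R, ∑ k ∈ S p, b k := by
  have h1 : ∑ k ∈ I, b k ≤ ∑ k ∈ R.biUnion S, b k := by
    apply Finset.sum_le_sum_of_subset_of_nonneg
    · intro k hk
      obtain ⟨p, hp, hkp⟩ := hc k hk
      exact Finset.mem_biUnion.2 ⟨p, hp, hkp⟩
    · intros; exact hb _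
  refine h1.trans ?_
  clear h1 hc _hw
  induction R using Finset.induction_on with
  | empty => simp
  | insert a R ha ih =>
    rw [Finset.biUnion_insert, Finset.sum_insert ha]
    have := Finset.sum_union_inter (s₁ := S a) (s₂ := R.biUnion S) (f := b)
    have h0 : 0 ≤ ∑ k ∈ S a ∩ R.biUnion S, b k := Finset.sum_nonneg fun _ _ => hb _
    linarith

lemma sq_gap (a : ℕ → ℝ) (m j N : ℕ) (hmj : m ≤ j) (hj : j < N)
    (hmono : ∀ i j, i ≤ j → j < N → a i ≤ a j) :
    ∑ k ∈ Finset.Ico m j, (a (k+1) - a k)^2 ≤ (a j - a m)^2 := by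
  induction j, hmj using Nat.le_induction with
  | base => simp
  | succ j hmj ih =>
    rw [Finset.sum_Ico_succ_top hmj]
    have := ih (by omega)
    have h1 := hmono m j hmj (by omega)
    have h2 := hmono j (j+1) (by omega) hj
    nlinarith [mul_nonneg (sub_nonneg.2 h1) (sub_nonneg.2 h2)]

/-- First bound: a family of pairs crossing each gap. -/
lemma chain_bound (a : ℕ → ℝ) (N : ℕ) (R : Finset (ℕ × ℕ))
    (hmono : ∀ i j, i ≤ j → j < N → a i ≤ a j)
    (hR : ∀ p ∈ R, p.1 < p.2 ∧ p.2 < N)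
    (hcross : ∀ k, k + 1 < N → ∃ p ∈ R, p.1 ≤ k ∧ k < p.2) :
    ∑ k ∈ Finset.range (N-1), (a (k+1) - a k)^2 ≤ ∑ p ∈ R, (a p.2 - a p.1)^2 := by
  have hw : ∀ p ∈ R, ∑ k ∈ Finset.Ico p.1 p.2, (a (k+1) - a k)^2 ≤ (a p.2 - a p.1)^2 :=
    fun p hp => sq_gap a _ _ N (hR p hp).1.le (hR p hp).2 hmono
  refine (cover_le R (Finset.range (N-1)) (fun p => Finset.Ico p.1 p.2)
    (fun p => (a p.2 - a p.1)^2) (fun k => (a (k+1) - a k)^2) (fun _ => sq_nonneg _) hw ?_).trans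
    (Finset.sum_le_sum hw)
  intro k hk
  obtain ⟨p, hp, h⟩ := hcross k (by have := Finset.mem_range.1 hk; omega)
  exact ⟨p, hp, Finset.mem_Ico.2 h⟩

/-- Weights of the gaps for the second bound. -/
noncomputable def gapw (a : ℕ → ℝ) (k : ℕ) : ℝ :=
  if k = 0 then (a 2 - a 0)^2 else if k = 1 then (a 2 - a 1)^2 else (a (k+1) - a k)^2

/-- Gaps charged to a pair. -/
def gapS (p : ℕ × ℕ) : Finset ℕ :=
  if p.1 ≤ 1 then insert p.1 (Finset.Ico 2 p.2) else Finset.Ico p.1 p.2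

lemma gapw_nonneg (a : ℕ → ℝ) (k : ℕ) : 0 ≤ gapw a k := by
  unfold gapw; split_ifs <;> positivity

lemma gapw_sum (a : ℕ → ℝ) (m j : ℕ) (hm : 2 ≤ m) :
    ∑ k ∈ Finset.Ico m j, gapw a k = ∑ k ∈ Finset.Ico m j, (a (k+1) - a k)^2 := by
  apply Finset.sum_congr rfl
  intro k hk
  have := Finset.mem_Ico.1 hk
  unfold gapw
  rw [if_neg (by omega), if_neg (by omega)]

lemma gapS_le (a : ℕ → ℝ) (N i j : ℕ) (hij : i < j) (hj2 : 2 ≤ j) (hj : j < N)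
    (hmono : ∀ i j, i ≤ j → j < N → a i ≤ a j) :
    ∑ k ∈ gapS (i, j), gapw a k ≤ (a j - a i)^2 := by
  unfold gapS
  dsimp only
  split_ifs with h
  · rw [Finset.sum_insert (by simp; omega), gapw_sum _ _ _ le_rfl]
    have h1 := sq_gap a 2 j N hj2 hj hmono
    have h2 : gapw a i = (a 2 - a i)^2 := by
      unfold gapw
      rcases (by omega : i = 0 ∨ i = 1) with rfl | rfl <;> simp
    rw [h2]
    nlinarith [mul_nonneg (sub_nonneg.2 (hmono i 2 (by omega) (by omega)))
      (sub_nonneg.2 (hmono 2 j hj2 hj))]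
  · rw [gapw_sum _ _ _ (by omega)]
    exact sq_gap a i j N hij.le hj hmono

lemma gapS_lt (a : ℕ → ℝ) (N i j : ℕ) (hij : i + 2 ≤ j) (hj2 : 3 ≤ j) (hj : j < N)
    (hmono : ∀ i j, i ≤ j → j < N → a i ≤ a j) (h12 : a 0 < a 2 ∧ a 1 < a 2)
    (hst : ∀ k, 2 ≤ k → k + 1 < N → a k < a (k+1)) :
    ∑ k ∈ gapS (i, j), gapw a k < (a j - a i)^2 := by
  unfold gapS
  dsimp only
  split_ifs with h
  · rw [Finset.sum_insert (by simp; omega), gapw_sum _ _ _ le_rfl]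
    have h1 := sq_gap a 2 j N (by omega) hj hmono
    have h2 : gapw a i = (a 2 - a i)^2 := by
      unfold gapw
      rcases (by omega : i = 0 ∨ i = 1) with rfl | rfl <;> simp
    rw [h2]
    have h3 : a i < a 2 := by
      rcases (by omega : i = 0 ∨ i = 1) with rfl | rfl
      exacts [h12.1, h12.2]
    have h4 : a 2 < a j := (hst 2 le_rfl (by omega)).trans_le (hmono 3 j hj2 hj)
    nlinarith [mul_pos (sub_pos.2 h3) (sub_pos.2 h4)]
  · rw [gapw_sum _ _ _ (by omega), Finset.sum_eq_sum_Ico_succ_bot (by omega)]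
    have h1 := sq_gap a (i+1) j N (by omega) hj hmono
    have h3 : a i < a (i+1) := hst i (by omega) (by omega)
    have h4 : a (i+1) < a j :=
      (hst (i+1) (by omega) (by omega)).trans_le (hmono (i+1+1) j (by omega) hj)
    nlinarith [mul_pos (sub_pos.2 h3) (sub_pos.2 h4)]

/-- Second bound: additionally `0` and `1` are not joined, so both leave `{0,1}`. -/
lemma tri_bound (a : ℕ → ℝ) (N : ℕ) (hN : 3 ≤ N) (R : Finset (ℕ × ℕ))
    (hmono : ∀ i j, i ≤ j → j < N → a i ≤ a j)
    (hR : ∀ p ∈ R, p.1 < p.2 ∧ p.2 < N) (h01 : (0, 1) ∉ R)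
    (hcross : ∀ k, k + 1 < N → ∃ p ∈ R, p.1 ≤ k ∧ k < p.2)
    (h1 : ∃ p ∈ R, p.1 = 1) :
    ∑ k ∈ Finset.range (N-1), gapw a k ≤ ∑ p ∈ R, (a p.2 - a p.1)^2 ∧
    ((a 0 < a 2 ∧ a 1 < a 2) → (∀ k, 2 ≤ k → k + 1 < N → a k < a (k+1)) →
      ∑ p ∈ R, (a p.2 - a p.1)^2 ≤ ∑ k ∈ Finset.range (N-1), gapw a k →
      ∀ p ∈ R, p.2 ≤ 2 ∨ p.1 + 1 = p.2) := by
  have hj2 : ∀ p ∈ R, 2 ≤ p.2 := by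
    rintro ⟨i, j⟩ hp
    have := hR _ hp
    by_contra hlt
    simp only at this hlt
    obtain ⟨rfl, rfl⟩ : i = 0 ∧ j = 1 := by omega
    exact h01 hp
  have hw : ∀ p ∈ R, ∑ k ∈ gapS p, gapw a k ≤ (a p.2 - a p.1)^2 :=
    fun p hp => gapS_le a N p.1 p.2 (hR p hp).1 (hj2 p hp) (hR p hp).2 hmono
  have hcov := cover_le R (Finset.range (N-1)) gapS (fun p => (a p.2 - a p.1)^2) (gapw a)
    (gapw_nonneg a) hw (by
      intro k hk
      have hk := Finset.mem_range.1 hk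
      rcases (by omega : k = 1 ∨ k ≠ 1) with rfl | hk1
      · obtain ⟨p, hp, h⟩ := h1
        refine ⟨p, hp, ?_⟩
        unfold gapS
        rw [if_pos (by omega), h]
        simp
      · obtain ⟨p, hp, h⟩ := hcross k (by omega)
        refine ⟨p, hp, ?_⟩
        unfold gapS
        split_ifs with hh
        · simp only [Finset.mem_insert, Finset.mem_Ico]; omega
        · simp only [Finset.mem_Ico]; omega)
  refine ⟨hcov.trans (Finset.sum_le_sum hw), ?_⟩
  intro h12 hst hle p hp
  by_contra hcon
  have hlt := gapS_lt a N p.1 p.2 (by have := hR p hp; omega) (by omega) (hR p hp).2 hmono h12 hst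
  have := Finset.sum_lt_sum hw ⟨p, hp, hlt⟩
  linarith

/-- Edges (as increasing pairs) below `N` of a relation on `ℕ`. -/
noncomputable def Ed (N : ℕ) (A : ℕ → ℕ → Prop) : Finset (ℕ × ℕ) :=
  (Finset.range N ×ˢ Finset.range N).filter (fun p => p.1 < p.2 ∧ A p.1 p.2)

lemma mem_Ed {N : ℕ} {A : ℕ → ℕ → Prop} {p : ℕ × ℕ} :
    p ∈ Ed N A ↔ p.1 < p.2 ∧ p.2 < N ∧ A p.1 p.2 := by
  unfold Ed
  simp only [Finset.mem_filter, Finset.mem_product, Finset.mem_range]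
  constructor
  · rintro ⟨⟨_, h⟩, h1, h2⟩; exact ⟨h1, h, h2⟩
  · rintro ⟨h1, h, h2⟩; exact ⟨⟨h1.trans h, h⟩, h1, h2⟩

lemma abs_diff_sq_le (s t : ℝ) : (|t| - |s|)^2 ≤ (s + t)^2 := by
  have h1 := sq_abs s
  have h2 := sq_abs t
  have h3 : -(|s| * |t|) ≤ s * t := by rw [← abs_mul]; exact neg_abs_le _
  nlinarith

lemma gapw_range (a : ℕ → ℝ) (N : ℕ) (hN : 3 ≤ N) :
    ∑ k ∈ Finset.range (N-1), gapw a k = (a 2 - a 0)^2 + (a 2 - a 1)^2 +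
      ∑ k ∈ Finset.Ico 2 (N-1), (a (k+1) - a k)^2 := by
  rw [← gapw_sum _ _ _ le_rfl, Finset.range_eq_Ico, Finset.sum_eq_sum_Ico_succ_bot (by omega),
    Finset.sum_eq_sum_Ico_succ_bot (by omega)]
  simp [gapw]; ring

lemma gap_range (a : ℕ → ℝ) (N : ℕ) (hN : 3 ≤ N) :
    ∑ k ∈ Finset.range (N-1), (a (k+1) - a k)^2 = (a 1 - a 0)^2 + (a 2 - a 1)^2 +
      ∑ k ∈ Finset.Ico 2 (N-1), (a (k+1) - a k)^2 := by
  rw [Finset.range_eq_Ico, Finset.sum_eq_sum_Ico_succ_bot (by omega),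
    Finset.sum_eq_sum_Ico_succ_bot (by omega)]
  simp; ring

/-- The core inequality, with the equality analysis. -/
lemma core_bound (N : ℕ) (hN : 3 ≤ N) (A : ℕ → ℕ → Prop) (X : ℕ → ℝ) (u v : ℕ)
    (huv : u < v) (hv : v < N) (hA : A u v) (hbad : 0 ≤ X u * X v)
    (hmono : ∀ i j, i ≤ j → j < N → |X i| ≤ |X j|)
    (hcut : ∀ S : Set ℕ, (∃ i < N, i ∈ S) → (∃ i < N, i ∉ S) →
      ∃ i j, i < j ∧ j < N ∧ A i j ∧ (i ∈ S ↔ j ∉ S) ∧ (i, j) ≠ (u, v)) :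
    (|X 0| + |X 1|)^2 + ∑ k ∈ Finset.range (N-1), gapw (fun i => |X i|) k ≤
      ∑ p ∈ Ed N A, (X p.1 + X p.2)^2 ∧
    (|X 0| = |X 1| → 0 < |X 0| → |X 1| < |X 2| →
      (∀ k, 2 ≤ k → k + 1 < N → |X k| < |X (k+1)|) →
      ∑ p ∈ Ed N A, (X p.1 + X p.2)^2 ≤
      (|X 0| + |X 1|)^2 + ∑ k ∈ Finset.range (N-1), gapw (fun i => |X i|) k →
      ∀ i j, i < j → j < N → (A i j ↔ (j ≤ 2 ∨ i + 1 = j))) := by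
  set a : ℕ → ℝ := fun i => |X i| with ha
  set R := (Ed N A).erase (u, v) with hRdef
  have hmemR : ∀ p, p ∈ R ↔ p ≠ (u, v) ∧ p.1 < p.2 ∧ p.2 < N ∧ A p.1 p.2 := by
    intro p; rw [hRdef, Finset.mem_erase, mem_Ed]
  have hsum : ∑ p ∈ Ed N A, (X p.1 + X p.2)^2 = (X u + X v)^2 + ∑ p ∈ R, (X p.1 + X p.2)^2 := by
    exact (Finset.add_sum_erase (Ed N A) (fun p => (X p.1 + X p.2)^2)
      (mem_Ed.2 ⟨huv, hv, hA⟩ : (u, v) ∈ Ed N A)).symm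
  have hT : ∑ p ∈ R, (a p.2 - a p.1)^2 ≤ ∑ p ∈ R, (X p.1 + X p.2)^2 :=
    Finset.sum_le_sum fun p _ => abs_diff_sq_le _ _
  have he : (X u + X v)^2 = (a u + a v)^2 := by
    have h1 := sq_abs (X u)
    have h2 := sq_abs (X v)
    have h3 : |X u| * |X v| = X u * X v := by rw [← abs_mul]; exact abs_of_nonneg hbad
    simp only [ha]
    nlinarith
  have hR : ∀ p ∈ R, p.1 < p.2 ∧ p.2 < N := fun p hp =>
    ⟨((hmemR p).1 hp).2.1, ((hmemR p).1 hp).2.2.1⟩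
  have hcross : ∀ k, k + 1 < N → ∃ p ∈ R, p.1 ≤ k ∧ k < p.2 := by
    intro k hk
    obtain ⟨i, j, hij, hj, hAij, hS, hne⟩ := hcut {i | i ≤ k} ⟨0, by omega, by simp⟩
      ⟨k+1, hk, by simp⟩
    refine ⟨(i, j), (hmemR _).2 ⟨hne, hij, hj, hAij⟩, ?_⟩
    simp only [Set.mem_ofPred_eq] at hS
    constructor <;> simp only <;> omega
  have h0 : ∀ i, 0 ≤ a i := fun i => abs_nonneg _
  by_cases h01 : u = 0 ∧ v = 1
  · obtain ⟨rfl, rfl⟩ := h01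
    have h1 : ∃ p ∈ R, p.1 = 1 := by
      obtain ⟨i, j, hij, hj, hAij, hS, hne⟩ := hcut {1} ⟨1, by omega, by simp⟩
        ⟨0, by omega, by simp⟩
      refine ⟨(i, j), (hmemR _).2 ⟨hne, hij, hj, hAij⟩, ?_⟩
      simp only [Set.mem_singleton_iff] at hS
      simp only [ne_eq, Prod.mk.injEq] at hne
      simp only
      omega
    have hn01 : (0, 1) ∉ R := by rw [hmemR]; simp
    obtain ⟨hb1, hb2⟩ := tri_bound a N hN R hmono hR hn01 hcross h1
    constructor
    · rw [hsum, he]; simp only [ha] at *; linarith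
    · intro e01 hp e12 hst hle
      have hall := hb2 ⟨by simp only [ha]; linarith, e12⟩ hst
        (by rw [hsum, he] at hle; simp only [ha] at *; linarith)
      have hall' : ∀ i j, i < j → j < N → A i j → j ≤ 2 ∨ i + 1 = j := by
        intro i j hij hj hAij
        by_cases h : (i, j) = (0, 1)
        · simp only [Prod.mk.injEq] at h; omega
        · exact hall (i, j) ((hmemR _).2 ⟨h, hij, hj, hAij⟩)
      intro i j hij hj
      refine ⟨hall' i j hij hj, ?_⟩
      intro hor
      have key : ∀ S : Set ℕ, (∃ i < N, i ∈ S) → (∃ i < N, i ∉ S) →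
          (∀ i' j', i' < j' → (j' ≤ 2 ∨ i' + 1 = j') → (i', j') ≠ (0,1) → (i' ∈ S ↔ j' ∉ S) →
            i' = i ∧ j' = j) → A i j := by
        intro S hs1 hs2 hs3
        obtain ⟨i', j', hij', hj', hA', hS, hne⟩ := hcut S hs1 hs2
        obtain ⟨rfl, rfl⟩ := hs3 i' j' hij' (hall' _ _ hij' hj' hA') hne hS
        exact hA'
      rcases (by omega : (i = 0 ∧ j = 1) ∨ (i = 0 ∧ j = 2) ∨ (i = 1 ∧ j = 2) ∨ (3 ≤ j ∧ i + 1 = j))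
        with h | h | h | h
      · obtain ⟨rfl, rfl⟩ := h; exact hA
      · apply key {0} ⟨0, by omega, by simp⟩ ⟨1, by omega, by simp⟩
        intro i' j' h1 h2 h3 h4
        simp only [Set.mem_singleton_iff, ne_eq, Prod.mk.injEq] at *
        omega
      · apply key {1} ⟨1, by omega, by simp⟩ ⟨0, by omega, by simp⟩
        intro i' j' h1 h2 h3 h4
        simp only [Set.mem_singleton_iff, ne_eq, Prod.mk.injEq] at *
        omega
      · apply key {k | k ≤ i} ⟨0, by omega, by simp⟩ ⟨j, by omega, by simp; omega⟩
        intro i' j' h1 h2 h3 h4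
        simp only [Set.mem_ofPred_eq, ne_eq, Prod.mk.injEq] at *
        omega
  · have hb := chain_bound a N R hmono hR hcross
    rw [gap_range a N hN] at hb
    rw [gapw_range a N hN, hsum, he]
    have hge : a 0 + a 2 ≤ a u + a v :=
      add_le_add (hmono 0 u (by omega) (by omega)) (hmono 2 v (by omega) hv)
    have hsq : (a 0 + a 2)^2 ≤ (a u + a v)^2 :=
      pow_le_pow_left₀ (add_nonneg (h0 _) (h0 _)) hge 2
    have m01 : a 0 ≤ a 1 := hmono 0 1 (by omega) (by omega)
    have m12 : a 1 ≤ a 2 := hmono 1 2 (by omega) (by omega)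
    constructor
    · change (a 0 + a 1)^2 + _ ≤ _
      nlinarith [mul_nonneg (h0 0) (sub_nonneg.2 m12)]
    · intro e01 hp e12 hst hle
      exfalso
      change a 0 = a 1 at e01
      change 0 < a 0 at hp
      change a 1 < a 2 at e12
      change _ ≤ (a 0 + a 1)^2 + _ at hle
      nlinarith [mul_pos hp (sub_pos.2 e12)]

/-- The parent of a vertex `j ≥ 3` in the extremal graph. -/
def par (N j : ℕ) : ℕ := min (j-1) (N-1)

/-- The (sign-flipped) quadratic form of the extremal graph. -/
noncomputable def FF (n N : ℕ) (f : ℕ → ℝ) : ℝ :=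
  (f 0 + f 1)^2 + (f 2 - f 0)^2 + (f 2 - f 1)^2 + ∑ j ∈ Finset.Ico 3 n, (f j - f (par N j))^2

lemma FF_split (n N : ℕ) (hN : 3 ≤ N) (hn : N ≤ n) (f : ℕ → ℝ) :
    FF n N f = (f 0 + f 1)^2 + ∑ k ∈ Finset.range (N-1), gapw f k +
      ∑ j ∈ Finset.Ico N n, (f j - f (N-1))^2 := by
  unfold FF
  rw [gapw_range f N hN, ← Finset.sum_Ico_consecutive _ hN hn]
  have h1 : ∑ j ∈ Finset.Ico 3 N, (f j - f (par N j))^2 =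
      ∑ k ∈ Finset.Ico 2 (N-1), (f (k+1) - f k)^2 := by
    have : N = (N-1) + 1 := by omega
    conv_lhs => rw [this, ← Finset.sum_Ico_add' _ 2 (N-1) 1]
    apply Finset.sum_congr rfl
    intro k hk
    have := Finset.mem_Ico.1 hk
    have : par (N-1+1) (k+1) = k := by unfold par; omega
    rw [this]
  have h2 : ∑ j ∈ Finset.Ico N n, (f j - f (par N j))^2 =
      ∑ j ∈ Finset.Ico N n, (f j - f (N-1))^2 := by
    apply Finset.sum_congr rfl
    intro k hk
    have := Finset.mem_Ico.1 hk
    have : par N k = N-1 := by unfold par; omega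
    rw [this]
  rw [h1, h2]; ring

/-- The transplanted vector. -/
noncomputable def tr (N : ℕ) (X : ℕ → ℝ) (c : ℕ → ℕ) (j : ℕ) : ℝ :=
  if j < N then |X j| else |X (N-1)| + max (|X j| - |X (c j)|) 0

lemma gapw_congr (N : ℕ) (hN : 3 ≤ N) (f g : ℕ → ℝ) (h : ∀ i < N, f i = g i) :
    ∑ k ∈ Finset.range (N-1), gapw f k = ∑ k ∈ Finset.range (N-1), gapw g k := by
  apply Finset.sum_congr rfl
  intro k hk
  have := Finset.mem_range.1 hk
  unfold gapw
  rw [h 0 (by omega), h 1 (by omega), h 2 (by omega), h k (by omega), h (k+1) (by omega)]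

lemma main_bound (n N : ℕ) (hN : 3 ≤ N) (hn : N < n) (A : ℕ → ℕ → Prop) (X : ℕ → ℝ) (u v : ℕ)
    (huv : u < v) (hv : v < N) (hA : A u v) (hbad : 0 ≤ X u * X v)
    (hmono : ∀ i j, i ≤ j → j < N → |X i| ≤ |X j|)
    (hcut : ∀ S : Set ℕ, (∃ i < N, i ∈ S) → (∃ i < N, i ∉ S) →
      ∃ i j, i < j ∧ j < N ∧ A i j ∧ (i ∈ S ↔ j ∉ S) ∧ (i, j) ≠ (u, v))
    (c : ℕ → ℕ) (hc : ∀ j, N ≤ j → j < n → c j < N ∧ A (c j) j) :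
    FF n N (tr N X c) ≤ ∑ p ∈ Ed n A, (X p.1 + X p.2)^2 ∧
    ((∀ j < n, tr N X c j = |X j|) → |X 0| = |X 1| → 0 < |X 0| → |X 1| < |X 2| →
      (∀ j, 3 ≤ j → j < n → |X (par N j)| < |X j|) →
      ∑ p ∈ Ed n A, (X p.1 + X p.2)^2 ≤ FF n N (tr N X c) →
      ∀ i j, i < j → j < n → (A i j ↔ (j ≤ 2 ∨ (3 ≤ j ∧ i = par N j)))) := by
  obtain ⟨hb1, hb2⟩ := core_bound N hN A X u v huv hv hA hbad hmono hcut
  set P := (Ed n A).filter (fun p => N ≤ p.2) with hP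
  have hsplit : ∑ p ∈ Ed n A, (X p.1 + X p.2)^2 =
      ∑ p ∈ Ed N A, (X p.1 + X p.2)^2 + ∑ p ∈ P, (X p.1 + X p.2)^2 := by
    rw [← Finset.sum_filter_add_sum_filter_not (Ed n A) (fun p => p.2 < N)]
    congr 1
    · apply Finset.sum_congr _ (fun _ _ => rfl)
      ext p
      simp only [Finset.mem_filter, mem_Ed]
      constructor
      · rintro ⟨⟨a, b, d⟩, e⟩; exact ⟨a, e, d⟩
      · rintro ⟨a, b, d⟩; exact ⟨⟨a, by omega, d⟩, b⟩
    · apply Finset.sum_congr _ (fun _ _ => rfl)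
      ext p
      simp only [hP, Finset.mem_filter, not_lt]
  set I := (Finset.Ico N n).image (fun j => (c j, j)) with hI
  have hIP : I ⊆ P := by
    intro p hp
    obtain ⟨j, hj, rfl⟩ := Finset.mem_image.1 hp
    have hj := Finset.mem_Ico.1 hj
    have := hc j hj.1 hj.2
    exact Finset.mem_filter.2 ⟨mem_Ed.2 ⟨by simp only; omega, hj.2, this.2⟩, hj.1⟩
  have hIsum : ∑ p ∈ I, (X p.1 + X p.2)^2 = ∑ j ∈ Finset.Ico N n, (X (c j) + X j)^2 := by
    rw [hI, Finset.sum_image]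
    intro a _ b _ h
    exact (Prod.mk.injEq _ _ _ _ ▸ h).2
  have hPI : ∑ p ∈ P, (X p.1 + X p.2)^2 =
      ∑ p ∈ P \ I, (X p.1 + X p.2)^2 + ∑ p ∈ I, (X p.1 + X p.2)^2 :=
    (Finset.sum_sdiff hIP).symm
  have hPI0 : 0 ≤ ∑ p ∈ P \ I, (X p.1 + X p.2)^2 := Finset.sum_nonneg fun _ _ => sq_nonneg _
  have htN : ∀ i < N, tr N X c i = |X i| := fun i hi => by unfold tr; rw [if_pos hi]
  have hterm : ∀ j ∈ Finset.Ico N n,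
      (tr N X c j - tr N X c (N-1))^2 ≤ (X (c j) + X j)^2 := by
    intro j hj
    have hj := Finset.mem_Ico.1 hj
    rw [htN (N-1) (by omega)]
    unfold tr
    rw [if_neg (by omega), add_sub_cancel_left]
    refine le_trans ?_ (abs_diff_sq_le _ _)
    rcases le_total (|X j| - |X (c j)|) 0 with h | h
    · rw [max_eq_right h, zero_pow two_ne_zero]; positivity
    · rw [max_eq_left h]
  have hFF := FF_split n N hN hn.le (tr N X c)
  rw [gapw_congr N hN (tr N X c) (fun i => |X i|) htN, htN 0 (by omega), htN 1 (by omega)] at hFF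
  have hts := Finset.sum_le_sum hterm
  refine ⟨by linarith, ?_⟩
  intro htr e01 hp e12 hst hle
  have hcore := hb2 e01 hp e12 (by
    intro k hk hk1
    have := hst (k+1) (by omega) (by omega)
    rwa [show par N (k+1) = k by unfold par; omega] at this) (by linarith)
  have htop : ∀ k, k < N → k ≠ N - 1 → |X k| < |X (N-1)| := by
    intro k hk hk1
    by_cases h3 : N = 3
    · subst h3
      exact (hmono k 1 (by omega) (by omega)).trans_lt e12
    · have := hst (N-1) (by omega) (by omega)
      rw [show par N (N-1) = N-2 by unfold par; omega] at this
      exact (hmono k (N-2) (by omega) (by omega)).trans_lt this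
  have hbig : ∀ j, N ≤ j → j < n → |X (N-1)| < |X j| := by
    intro j h1 h2
    have := hst j (by omega) h2
    rwa [show par N j = N-1 by unfold par; omega] at this
  have hcN : ∀ j, N ≤ j → j < n → c j = N - 1 := by
    intro j h1 h2
    by_contra hne
    have h3 := htop (c j) (hc j h1 h2).1 hne
    have h4 := hbig j h1 h2
    have h5 := htr j h2
    unfold tr at h5
    rw [if_neg (by omega), max_eq_left (by linarith)] at h5
    linarith
  have hXN : 0 < |X (N-1)| := hp.trans_le (hmono 0 (N-1) (by omega) (by omega))
  have hsg : ∀ j, N ≤ j → j < n → X (N-1) * X j < 0 := by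
    intro j h1 h2
    have heq : ∑ j ∈ Finset.Ico N n, (X (c j) + X j)^2 =
        ∑ j ∈ Finset.Ico N n, (tr N X c j - tr N X c (N-1))^2 := by
      apply le_antisymm _ hts
      linarith
    have := (Finset.sum_eq_sum_iff_of_le hterm).1 heq.symm j (Finset.mem_Ico.2 ⟨h1, h2⟩)
    rw [htr j h2, htr (N-1) (by omega), hcN j h1 h2] at this
    have s1 := sq_abs (X (N-1))
    have s2 := sq_abs (X j)
    have := mul_pos hXN (hXN.trans (hbig j h1 h2))
    nlinarith
  have hextra : ∀ p ∈ P, p ∈ I := by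
    intro p hpP
    by_contra hpI
    have hz : ∑ p ∈ P \ I, (X p.1 + X p.2)^2 = 0 := by
      apply le_antisymm _ hPI0
      linarith
    have := (Finset.sum_eq_zero_iff_of_nonneg (fun _ _ => sq_nonneg _)).1 hz p
      (Finset.mem_sdiff.2 ⟨hpP, hpI⟩)
    have h0 : X p.1 + X p.2 = 0 := by simpa using this
    obtain ⟨hpE, hpN⟩ := Finset.mem_filter.1 hpP
    obtain ⟨q1, q2, q3⟩ := mem_Ed.1 hpE
    by_cases hlt : p.1 < N
    · have h1 := hmono p.1 (N-1) (by omega) (by omega)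
      have h2 := hbig p.2 hpN q2
      have h3 : X p.1 = - X p.2 := by linarith
      rw [h3, abs_neg] at h1
      linarith
    · have h1 := hsg p.1 (by omega) (by omega)
      have h2 := hsg p.2 hpN q2
      have h3 : X p.1 = - X p.2 := by linarith
      rw [h3] at h1
      linarith
  intro i j hij hj
  by_cases hjN : j < N
  · rw [hcore i j hij hjN]
    have : par N j = j - 1 := by unfold par; omega
    rw [this]
    omega
  · have h1 : par N j = N - 1 := by unfold par; omega
    rw [h1]
    constructor
    · intro h
      right
      refine ⟨by omega, ?_⟩
      have := hextra (i, j) (Finset.mem_filter.2 ⟨mem_Ed.2 ⟨hij, hj, h⟩, by simp only; omega⟩)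
      obtain ⟨j', hj', he⟩ := Finset.mem_image.1 this
      simp only [Prod.mk.injEq] at he
      obtain ⟨rfl, rfl⟩ := he
      exact hcN _ (by omega) hj
    · intro h
      have := (hc j (by omega) hj).2
      rw [hcN j (by omega) hj] at this
      rcases h with h | h
      · omega
      · rw [h.2]; exact this

/-- Bilinear companion of `FF`. -/
noncomputable def BB (n N : ℕ) (f g : ℕ → ℝ) : ℝ :=
  (f 0 + f 1) * (g 0 + g 1) + (f 2 - f 0) * (g 2 - g 0) + (f 2 - f 1) * (g 2 - g 1) +
    ∑ j ∈ Finset.Ico 3 n, (f j - f (par N j)) * (g j - g (par N j))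

lemma FF_add (n N : ℕ) (f g : ℕ → ℝ) (t : ℝ) :
    FF n N (fun k => f k + t * g k) = FF n N f + 2 * t * BB n N f g + t^2 * FF n N g := by
  have : ∑ j ∈ Finset.Ico 3 n, ((f j + t * g j) - (f (par N j) + t * g (par N j)))^2 =
      ∑ j ∈ Finset.Ico 3 n, (f j - f (par N j))^2 +
      2 * t * ∑ j ∈ Finset.Ico 3 n, (f j - f (par N j)) * (g j - g (par N j)) +
      t^2 * ∑ j ∈ Finset.Ico 3 n, (g j - g (par N j))^2 := by
    rw [Finset.mul_sum, Finset.mul_sum, ← Finset.sum_add_distrib, ← Finset.sum_add_distrib]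
    apply Finset.sum_congr rfl
    intros; ring
  unfold FF BB
  rw [this]; ring

lemma linear_zero (b c : ℝ) (h : ∀ t : ℝ, 0 ≤ 2 * t * b + t^2 * c) : b = 0 := by
  by_contra hb
  have hc : 0 ≤ c := by
    have h1 := h 1
    have h2 := h (-1)
    linarith
  have := h (-b / (c+1))
  have hc1 : 0 < c + 1 := by linarith
  have e : 2 * (-b / (c+1)) * b + (-b / (c+1))^2 * c = - (b^2 * (c + 2)) / (c+1)^2 := by
    field_simp; ring
  rw [e] at this
  have : - (b^2 * (c + 2)) / (c+1)^2 < 0 := by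
    apply div_neg_of_neg_of_pos
    · have := mul_pos (sq_pos_of_ne_zero hb) (by linarith : 0 < c + 2)
      linarith
    · positivity
  linarith

lemma FF_stat (n N : ℕ) (μ : ℝ) (f : ℕ → ℝ)
    (hmin : ∀ g : ℕ → ℝ, μ * ∑ k ∈ Finset.range n, (g k)^2 ≤ FF n N g)
    (hf : FF n N f = μ * ∑ k ∈ Finset.range n, (f k)^2) (g : ℕ → ℝ) :
    BB n N f g = μ * ∑ k ∈ Finset.range n, f k * g k := by
  have := linear_zero (BB n N f g - μ * ∑ k ∈ Finset.range n, f k * g k)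
    (FF n N g - μ * ∑ k ∈ Finset.range n, (g k)^2) (by
      intro t
      have h := hmin (fun k => f k + t * g k)
      rw [FF_add, hf] at h
      have e : ∑ k ∈ Finset.range n, (f k + t * g k)^2 = ∑ k ∈ Finset.range n, (f k)^2 +
        2 * t * ∑ k ∈ Finset.range n, f k * g k + t^2 * ∑ k ∈ Finset.range n, (g k)^2 := by
        rw [Finset.mul_sum, Finset.mul_sum, ← Finset.sum_add_distrib, ← Finset.sum_add_distrib]
        apply Finset.sum_congr rfl
        intros; ring
      rw [e] at h
      linarith)
  linarith

lemma FF_strict (n N : ℕ) (hN : 3 ≤ N) (hn : N < n) (μ : ℝ) (hμ : 0 < μ) (f : ℕ → ℝ)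
    (hmin : ∀ g : ℕ → ℝ, μ * ∑ k ∈ Finset.range n, (g k)^2 ≤ FF n N g)
    (hf : FF n N f = μ * ∑ k ∈ Finset.range n, (f k)^2)
    (h0 : ∀ k, 0 ≤ f k) (hmono : ∀ i j, i ≤ j → j < N → f i ≤ f j)
    (hpend : ∀ j, N ≤ j → j < n → f (N-1) ≤ f j) (hne : ∃ k < n, f k ≠ 0) :
    f 0 = f 1 ∧ 0 < f 0 ∧ f 1 < f 2 ∧ ∀ j, 3 ≤ j → j < n → f (par N j) < f j := by
  have hst := FF_stat n N μ f hmin hf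
  -- test with an upper set
  have hup2 : (f 2 - f 0) + (f 2 - f 1) =
      μ * ∑ k ∈ Finset.range n, f k * (if 2 ≤ k then 1 else 0) := by
    rw [← hst]
    unfold BB
    rw [Finset.sum_eq_zero]
    · simp
    · intro j hj
      have := Finset.mem_Ico.1 hj
      beta_reduce
      rw [if_pos (by omega), if_pos (by unfold par; omega)]; simp
  have hnn : ∀ m, ∀ k ∈ Finset.range n, 0 ≤ f k * (if m ≤ k then (1:ℝ) else 0) := by
    intro m k _
    split_ifs <;> simp [h0]
  have htop : 0 < f (N-1) := by
    by_contra hcon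
    have hz : f (N-1) = 0 := le_antisymm (not_lt.1 hcon) (h0 _)
    have hz2 : ∀ i < N, f i = 0 := fun i hi =>
      le_antisymm (hz ▸ hmono i (N-1) (by omega) (by omega)) (h0 _)
    rw [hz2 0 (by omega), hz2 1 (by omega), hz2 2 (by omega)] at hup2
    have hs : ∑ k ∈ Finset.range n, f k * (if 2 ≤ k then (1:ℝ) else 0) = 0 := by
      have : μ * ∑ k ∈ Finset.range n, f k * (if 2 ≤ k then (1:ℝ) else 0) = 0 := by linarith
      rcases mul_eq_zero.1 this with h | h
      · exact absurd h hμ.ne'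
      · exact h
    obtain ⟨k, hk, hfk⟩ := hne
    have := (Finset.sum_eq_zero_iff_of_nonneg (hnn 2)).1 hs k (Finset.mem_range.2 hk)
    by_cases hkN : k < N
    · exact hfk (hz2 k hkN)
    · rw [if_pos (by omega), mul_one] at this
      exact hfk this
  have hpp : ∀ j, N ≤ j → j < n → 0 < f j := fun j h1 h2 => htop.trans_le (hpend j h1 h2)
  have hpos : ∀ m, m < n → 0 < μ * ∑ k ∈ Finset.range n, f k * (if m ≤ k then (1:ℝ) else 0) := by
    intro m hm
    apply mul_pos hμ
    apply Finset.sum_pos' (hnn m)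
    refine ⟨n-1, Finset.mem_range.2 (by omega), ?_⟩
    rw [if_pos (by omega), mul_one]
    exact hpp _ (by omega) (by omega)
  have hleaf : ∀ j, N ≤ j → j < n → f j - f (N-1) = μ * f j := by
    intro j h1 h2
    have := hst (fun k => if k = j then 1 else 0)
    have e1 : ∑ k ∈ Finset.range n, f k * (if k = j then (1:ℝ) else 0) = f j := by
      simp [h2]
    rw [e1] at this
    rw [← this]
    unfold BB
    rw [Finset.sum_eq_single j]
    · beta_reduce
      rw [if_neg (by omega), if_neg (by omega), if_neg (by omega), if_pos rfl,
        if_neg (by unfold par; omega), show par N j = N-1 by unfold par; omega]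
      ring
    · intro k hk hkj
      beta_reduce
      rw [if_neg hkj, if_neg (by unfold par; omega)]; simp
    · intro h; exact absurd (Finset.mem_Ico.2 ⟨by omega, h2⟩) h
  have hμ1 : μ < 1 := by
    have h1 := hleaf N le_rfl hn
    have h2 := hpp N le_rfl hn
    by_contra hcon
    nlinarith
  have e0 : (f 0 + f 1) - (f 2 - f 0) = μ * f 0 := by
    have := hst (fun k => if k = 0 then 1 else 0)
    have e1 : ∑ k ∈ Finset.range n, f k * (if k = 0 then (1:ℝ) else 0) = f 0 := by
      simp; omega
    rw [e1] at this
    rw [← this]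
    unfold BB
    rw [Finset.sum_eq_zero]
    · simp; ring
    · intro j hj
      have := Finset.mem_Ico.1 hj
      beta_reduce
      rw [if_neg (by omega), if_neg (by unfold par; omega)]; simp
  have e1 : (f 0 + f 1) - (f 2 - f 1) = μ * f 1 := by
    have := hst (fun k => if k = 1 then 1 else 0)
    have e1 : ∑ k ∈ Finset.range n, f k * (if k = 1 then (1:ℝ) else 0) = f 1 := by
      simp; omega
    rw [e1] at this
    rw [← this]
    unfold BB
    rw [Finset.sum_eq_zero]
    · simp; ring
    · intro j hj
      have := Finset.mem_Ico.1 hj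
      beta_reduce
      rw [if_neg (by omega), if_neg (by unfold par; omega)]; simp
  have h01 : f 0 = f 1 := by
    have : (f 0 - f 1) * (1 - μ) = 0 := by linarith
    rcases mul_eq_zero.1 this with h | h
    · linarith
    · linarith
  have h12 : f 1 < f 2 := by
    have := hpos 2 (by omega)
    linarith
  refine ⟨h01, ?_, h12, ?_⟩
  · by_contra hcon
    have : f 0 = 0 := le_antisymm (not_lt.1 hcon) (h0 _)
    rw [← h01, this] at e0
    have := h0 0
    linarith
  · intro m hm hmn
    by_cases hmN : m < N
    · have := hst (fun k => if m ≤ k then 1 else 0)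
      have h2 := hpos m hmn
      rw [← this] at h2
      unfold BB at h2
      rw [Finset.sum_eq_single m] at h2
      · beta_reduce at h2
        rw [if_neg (by omega), if_neg (by omega), if_neg (by omega), if_pos le_rfl,
          if_neg (by unfold par; omega)] at h2
        linarith
      · intro k hk hkm
        by_cases hmk : m ≤ k
        · beta_reduce
          rw [if_pos hmk, if_pos (by unfold par; omega)]; simp
        · beta_reduce
          rw [if_neg hmk, if_neg (by unfold par; omega)]; simp
      · intro h; exact absurd (Finset.mem_Ico.2 ⟨hm, hmn⟩) h
    · have := hleaf m (by omega) hmn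
      rw [show par N m = N-1 by unfold par; omega]
      have := mul_pos hμ (hpp m (by omega) hmn)
      linarith

/-! ### Spectral preliminaries -/

/-- The signless Laplacian quadratic form. -/
noncomputable def QF {V : Type*} [Fintype V] (G : SimpleGraph V) (x : V → ℝ) : ℝ :=
  ∑ i, x i * (signlessLaplacian G).mulVec x i

lemma sL_apply {V : Type*} [Fintype V] (G : SimpleGraph V) (x : V → ℝ) (i : V) :
    (signlessLaplacian G).mulVec x i = ∑ j, if G.Adj i j then x i + x j else 0 := by
  unfold Matrix.mulVec dotProduct signlessLaplacian
  have h : (G.degree i : ℝ) = ∑ j, if G.Adj i j then (1:ℝ) else 0 := by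
    rw [← SimpleGraph.card_neighborFinset_eq_degree, SimpleGraph.neighborFinset_eq_filter]
    simp
  simp only [add_mul, Finset.sum_add_distrib, ite_mul, zero_mul, Finset.sum_ite_eq,
    Finset.mem_univ, if_true, one_mul]
  rw [h, Finset.sum_mul, ← Finset.sum_add_distrib]
  apply Finset.sum_congr rfl
  intro j _
  split_ifs <;> simp

lemma QF_eq {V : Type*} [Fintype V] (G : SimpleGraph V) (x : V → ℝ) :
    QF G x = ∑ i, ∑ j, if G.Adj i j then x i * (x i + x j) else 0 := by
  unfold QF
  apply Finset.sum_congr rfl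
  intro i _
  rw [sL_apply, Finset.mul_sum]
  apply Finset.sum_congr rfl
  intro j _
  split_ifs <;> simp

lemma QF_nonneg {V : Type*} [Fintype V] (G : SimpleGraph V) (x : V → ℝ) : 0 ≤ QF G x := by
  have h2 : 2 * QF G x = ∑ i, ∑ j, if G.Adj i j then (x i + x j)^2 else 0 := by
    have e : QF G x = ∑ i, ∑ j, if G.Adj i j then x j * (x i + x j) else 0 := by
      rw [QF_eq, Finset.sum_comm]
      apply Finset.sum_congr rfl; intro i _
      apply Finset.sum_congr rfl; intro j _
      rw [G.adj_comm]
      split_ifs <;> ring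
    rw [two_mul]
    nth_rewrite 1 [QF_eq]
    rw [e, ← Finset.sum_add_distrib]
    apply Finset.sum_congr rfl; intro i _
    rw [← Finset.sum_add_distrib]
    apply Finset.sum_congr rfl; intro j _
    split_ifs <;> ring
  have : 0 ≤ ∑ i, ∑ j, if G.Adj i j then (x i + x j)^2 else 0 := by
    apply Finset.sum_nonneg; intro i _
    apply Finset.sum_nonneg; intro j _
    split_ifs <;> positivity
  linarith

lemma sL_symm {V : Type*} [Fintype V] (G : SimpleGraph V) :
    (signlessLaplacian G).IsHermitian := by
  ext i j
  simp only [Matrix.conjTranspose_apply, signlessLaplacian, star_trivial]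
  by_cases h : i = j
  · subst h; rfl
  · rw [if_neg h, if_neg (Ne.symm h), G.adj_comm]

lemma qmin_spec {V : Type*} [Fintype V] [Nonempty V] (G : SimpleGraph V) :
    (∃ x : V → ℝ, x ≠ 0 ∧ (signlessLaplacian G).mulVec x = qmin G • x) ∧
    ∀ z : V → ℝ, qmin G * ∑ i, (z i)^2 ≤ QF G z := by
  set Q := signlessLaplacian G with hQ
  have hT : (Matrix.toEuclideanLin Q).IsSymmetric :=
    Matrix.isSymmetric_toEuclideanLin_iff.2 (sL_symm G)
  have hev := hT.hasEigenvalue_iInf_of_finiteDimensional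
  set m : ℝ := ⨅ x : { x : EuclideanSpace ℝ V // x ≠ 0 },
    RCLike.re (inner ℝ (Matrix.toEuclideanLin Q x) (x : EuclideanSpace ℝ V)) /
      ‖(x : EuclideanSpace ℝ V)‖ ^ 2 with hm
  have hin : ∀ x : EuclideanSpace ℝ V,
      RCLike.re (inner ℝ (Matrix.toEuclideanLin Q x) x) = QF G x.ofLp := by
    intro x
    rw [PiLp.inner_apply]
    simp only [RCLike.inner_apply, conj_trivial, RCLike.re_to_real]
    rfl
  have hnorm : ∀ x : EuclideanSpace ℝ V, ‖x‖^2 = ∑ i, (x.ofLp i)^2 := by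
    intro x
    rw [EuclideanSpace.norm_sq_eq]
    simp
  have hb : ∀ z : V → ℝ, m * ∑ i, (z i)^2 ≤ QF G z := by
    intro z
    by_cases hz : z = 0
    · subst hz; simpa using QF_nonneg G 0
    have hz' : WithLp.toLp 2 z ≠ 0 := by
      intro h; apply hz
      have := congrArg WithLp.ofLp h
      simpa using this
    have hle : m ≤ _ := ciInf_le (f := fun x : { x : EuclideanSpace ℝ V // x ≠ 0 } =>
      RCLike.re (inner ℝ (Matrix.toEuclideanLin Q x) (x : EuclideanSpace ℝ V)) /
      ‖(x : EuclideanSpace ℝ V)‖ ^ 2) ⟨0, by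
        rintro _ ⟨x, rfl⟩
        simp only
        rw [hin]
        exact div_nonneg (QF_nonneg _ _) (sq_nonneg _)⟩ ⟨WithLp.toLp 2 z, hz'⟩
    simp only at hle
    rw [hin, le_div_iff₀ (by have := norm_pos_iff.2 hz'; positivity), hnorm] at hle
    exact hle
  obtain ⟨x, hx⟩ := hev.exists_hasEigenvector
  have hx1 : Q.mulVec x.ofLp = m • x.ofLp := congrArg WithLp.ofLp hx.apply_eq_smul
  have hx0 : x.ofLp ≠ 0 := by
    intro h; apply hx.2
    ext i; simp [h]
  have hleast : IsLeast {μ : ℝ | ∃ x : V → ℝ, x ≠ 0 ∧ Q.mulVec x = μ • x} m := by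
    refine ⟨⟨_, hx0, hx1⟩, ?_⟩
    rintro μ ⟨z, hz, hzμ⟩
    have h1 := hb z
    have h2 : QF G z = μ * ∑ i, (z i)^2 := by
      unfold QF
      rw [← hQ, hzμ, Finset.mul_sum]
      apply Finset.sum_congr rfl; intro i _
      simp only [Pi.smul_apply, smul_eq_mul]; ring
    have h3 : 0 < ∑ i, (z i)^2 := by
      obtain ⟨i, hi⟩ := Function.ne_iff.1 hz
      exact Finset.sum_pos' (fun _ _ => sq_nonneg _) ⟨i, Finset.mem_univ _, by
        have : z i ≠ 0 := hi
        positivity⟩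
    rw [h2] at h1
    exact le_of_mul_le_mul_right h1 h3
  have : qmin G = m := hleast.csInf_eq
  rw [this]
  exact ⟨⟨_, hx0, hx1⟩, hb⟩

lemma QF_eig {V : Type*} [Fintype V] (G : SimpleGraph V) (x : V → ℝ) (μ : ℝ)
    (h : (signlessLaplacian G).mulVec x = μ • x) : QF G x = μ * ∑ i, (x i)^2 := by
  unfold QF
  rw [h, Finset.mul_sum]
  apply Finset.sum_congr rfl; intro i _
  simp only [Pi.smul_apply, smul_eq_mul]; ring

lemma sumsq_pos {V : Type*} [Fintype V] (z : V → ℝ) (hz : z ≠ 0) : 0 < ∑ i, (z i)^2 := by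
  obtain ⟨i, hi⟩ := Function.ne_iff.1 hz
  exact Finset.sum_pos' (fun _ _ => sq_nonneg _) ⟨i, Finset.mem_univ _, by
    have : z i ≠ 0 := hi
    positivity⟩

lemma eig_iso {V W : Type*} [Fintype V] [Fintype W] {G : SimpleGraph V} {H : SimpleGraph W}
    (e : G ≃g H) (x : V → ℝ) (μ : ℝ) (h : (signlessLaplacian G).mulVec x = μ • x) :
    (signlessLaplacian H).mulVec (x ∘ e.symm) = μ • (x ∘ e.symm) := by
  ext w
  have := congrFun h (e.symm w)
  rw [sL_apply] at this ⊢
  simp only [Pi.smul_apply, Function.comp] at this ⊢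
  rw [← this, ← Equiv.sum_comp e.toEquiv]
  apply Finset.sum_congr rfl
  intro j _
  have h1 : H.Adj w (e j) ↔ G.Adj (e.symm w) j := by
    rw [← e.map_adj_iff]; simp
  have h2 : e.symm (e j) = j := e.symm_apply_apply j
  change (if H.Adj w (e j) then x (e.symm w) + x (e.symm (e j)) else 0) = _
  simp only [h1, h2]

lemma qmin_iso {V W : Type*} [Fintype V] [Fintype W] {G : SimpleGraph V} {H : SimpleGraph W}
    (e : G ≃g H) : qmin G = qmin H := by
  have key : ∀ {V W : Type _} [Fintype V] [Fintype W] {G : SimpleGraph V} {H : SimpleGraph W}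
    (_ : G ≃g H) (μ : ℝ), (∃ x : V → ℝ, x ≠ 0 ∧ (signlessLaplacian G).mulVec x = μ • x) →
      (∃ x : W → ℝ, x ≠ 0 ∧ (signlessLaplacian H).mulVec x = μ • x) := by
    rintro V W _ _ G H e μ ⟨x, hx, h⟩
    refine ⟨x ∘ e.symm, ?_, eig_iso e x μ h⟩
    intro h0
    apply hx
    ext i
    have := congrFun h0 (e i)
    simpa using this
  unfold qmin
  congr 1
  ext μ
  refine ⟨key e μ, ?_⟩
  rintro ⟨x, hx, h⟩
  refine ⟨x ∘ e, ?_, ?_⟩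
  · intro h0
    apply hx
    ext i
    have := congrFun h0 (e.symm i)
    simpa using this
  · have := eig_iso e.symm x μ h
    exact this

/-! ### Graphs on `Fin n` -/

/-- Extension of a vector by zero. -/
noncomputable def ext0 {n : ℕ} (x : Fin n → ℝ) (k : ℕ) : ℝ := if h : k < n then x ⟨k, h⟩ else 0

/-- Adjacency as a relation on `ℕ`. -/
def natAdj {n : ℕ} (G : SimpleGraph (Fin n)) (i j : ℕ) : Prop :=
  ∃ (hi : i < n) (hj : j < n), G.Adj ⟨i, hi⟩ ⟨j, hj⟩

@[simp] lemma ext0_val {n : ℕ} (x : Fin n → ℝ) (k : Fin n) : ext0 x k = x k := by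
  unfold ext0; rw [dif_pos k.2]

@[simp] lemma natAdj_val {n : ℕ} (G : SimpleGraph (Fin n)) (i j : Fin n) :
    natAdj G i j ↔ G.Adj i j := by
  unfold natAdj
  exact ⟨fun ⟨_, _, h⟩ => h, fun h => ⟨i.2, j.2, h⟩⟩

lemma QF_fin {n : ℕ} (G : SimpleGraph (Fin n)) (X : ℕ → ℝ) :
    QF G (fun i => X i) = ∑ p ∈ Ed n (natAdj G), (X p.1 + X p.2)^2 := by
  set h : ℕ → ℕ → ℝ := fun i j => if natAdj G i j then X i * (X i + X j) else 0 with hh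
  have e1 : QF G (fun i => X i) = ∑ i ∈ Finset.range n, ∑ j ∈ Finset.range n, h i j := by
    rw [QF_eq, ← Fin.sum_univ_eq_sum_range (fun i => ∑ j ∈ Finset.range n, h i j)]
    apply Finset.sum_congr rfl; intro i _
    rw [← Fin.sum_univ_eq_sum_range (fun j => h i j)]
    apply Finset.sum_congr rfl; intro j _
    simp only [hh, natAdj_val]
  have e2 : ∀ i j, h i j = (if i < j then h i j else 0) + (if j < i then h i j else 0) := by
    intro i j
    rcases lt_trichotomy i j with hl | rfl | hl
    · rw [if_pos hl, if_neg (by omega), add_zero]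
    · have : h i i = 0 := by
        simp only [hh]
        rw [if_neg]
        rintro ⟨_, _, h⟩
        exact G.irrefl h
      simp [this]
    · rw [if_neg (by omega), if_pos hl, zero_add]
  have e3 : ∑ i ∈ Finset.range n, ∑ j ∈ Finset.range n, h i j =
      ∑ i ∈ Finset.range n, ∑ j ∈ Finset.range n,
        ((if i < j then h i j else 0) + (if j < i then h i j else 0)) :=
    Finset.sum_congr rfl fun i _ => Finset.sum_congr rfl fun j _ => e2 i j
  rw [e1, e3]
  simp only [Finset.sum_add_distrib]
  rw [Finset.sum_comm (f := fun i j => if j < i then h i j else 0), ← Finset.sum_add_distrib]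
  unfold Ed
  rw [Finset.sum_filter, Finset.sum_product]
  apply Finset.sum_congr rfl; intro i _
  rw [← Finset.sum_add_distrib]
  apply Finset.sum_congr rfl; intro j _
  have hs : natAdj G j i ↔ natAdj G i j := by
    unfold natAdj
    constructor
    · rintro ⟨a, b, c⟩; exact ⟨b, a, c.symm⟩
    · rintro ⟨a, b, c⟩; exact ⟨b, a, c.symm⟩
  simp only [hh, hs]
  by_cases h1 : i < j <;> by_cases h2 : natAdj G i j <;> simp [h1, h2]
  ring

lemma sum_range_fin {n : ℕ} (X : ℕ → ℝ) :
    ∑ i : Fin n, (X i)^2 = ∑ k ∈ Finset.range n, (X k)^2 :=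
  Fin.sum_univ_eq_sum_range (fun k => (X k)^2) n

/-- The extremal graph in convenient labelling. -/
def Cp (n N : ℕ) : SimpleGraph (Fin n) :=
  SimpleGraph.fromRel (fun i j => i.val < j.val ∧
    (j.val ≤ 2 ∨ (3 ≤ j.val ∧ i.val = par N j.val)))

lemma Cp_adj_lt (n N : ℕ) (i j : Fin n) (hij : i.val < j.val) :
    (Cp n N).Adj i j ↔ (j.val ≤ 2 ∨ (3 ≤ j.val ∧ i.val = par N j.val)) := by
  unfold Cp
  rw [SimpleGraph.fromRel_adj]
  constructor
  · rintro ⟨_, h | h⟩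
    · exact h.2
    · omega
  · intro h
    exact ⟨fun e => by rw [e] at hij; exact lt_irrefl _ hij, Or.inl ⟨hij, h⟩⟩

/-- Signs for the bipartition of the extremal graph minus an edge. -/
noncomputable def sg (N k : ℕ) : ℝ := if k ≤ 1 then -1 else (-1)^(min k N)

lemma sg_sq (N k : ℕ) : sg N k ^ 2 = 1 := by
  unfold sg
  split_ifs
  · norm_num
  · rw [← pow_mul, mul_comm, pow_mul]; norm_num

lemma sg_par (N j : ℕ) (hN : 3 ≤ N) (hj : 3 ≤ j) : sg N j = - sg N (par N j) := by
  unfold sg par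
  rw [if_neg (by omega), if_neg (by omega)]
  have : min j N = min (min (j-1) (N-1)) N + 1 := by omega
  rw [this, pow_succ]; ring

lemma QF_Cp (n N : ℕ) (hN : 3 ≤ N) (hn : N < n) (f : ℕ → ℝ) :
    QF (Cp n N) (fun i => sg N i * f i) = FF n N f := by
  rw [QF_fin (Cp n N) (fun k => sg N k * f k)]
  have hE : Ed n (natAdj (Cp n N)) = {(0,1), (0,2), (1,2)} ∪
      (Finset.Ico 3 n).image (fun j => (par N j, j)) := by
    ext ⟨i, j⟩
    simp only [mem_Ed, Finset.mem_union, Finset.mem_insert, Finset.mem_singleton, Prod.mk.injEq,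
      Finset.mem_image, Finset.mem_Ico]
    constructor
    · rintro ⟨h1, h2, hi, hj, h⟩
      have := (Cp_adj_lt n N ⟨i, hi⟩ ⟨j, hj⟩ h1).1 h
      simp only at this
      rcases this with h | h
      · left; omega
      · right; exact ⟨j, ⟨h.1, hj⟩, h.2.symm, rfl⟩
    · intro h
      have h3 : i < j ∧ j < n ∧ (j ≤ 2 ∨ (3 ≤ j ∧ i = par N j)) := by
        rcases h with h | ⟨j', h, h1, rfl⟩
        · omega
        · refine ⟨?_, h.2, Or.inr ⟨h.1, h1.symm⟩⟩
          unfold par at h1; omega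
      exact ⟨h3.1, h3.2.1, by omega, h3.2.1,
        (Cp_adj_lt n N ⟨i, by omega⟩ ⟨j, h3.2.1⟩ h3.1).2 h3.2.2⟩
  rw [hE, Finset.sum_union, Finset.sum_image]
  · have hs0 : sg N 0 = -1 := by simp [sg]
    have hs1 : sg N 1 = -1 := by simp [sg]
    have hs2 : sg N 2 = 1 := by simp [sg, show min 2 N = 2 by omega]
    unfold FF
    congr 1
    · rw [Finset.sum_insert (by simp), Finset.sum_insert (by simp), Finset.sum_singleton]
      simp only [hs0, hs1, hs2]
      ring
    · apply Finset.sum_congr rfl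
      intro j hj
      have := Finset.mem_Ico.1 hj
      have h2 := sg_sq N (par N j)
      simp only
      rw [sg_par N j hN this.1]
      have : (sg N (par N j) * f (par N j) + -sg N (par N j) * f j)^2 =
        sg N (par N j)^2 * (f j - f (par N j))^2 := by ring
      rw [this, h2, one_mul]
  · intro a _ b _ h
    simp only [Prod.mk.injEq] at h
    exact h.2
  · rw [Finset.disjoint_left]
    rintro ⟨i, j⟩ h1 h2
    simp only [Finset.mem_insert, Finset.mem_singleton, Prod.mk.injEq,
      Finset.mem_image, Finset.mem_Ico] at h1 h2
    obtain ⟨j', h, h3, rfl⟩ := h2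
    omega

lemma sg_sum (n N : ℕ) (f : ℕ → ℝ) :
    ∑ i : Fin n, (sg N i * f i)^2 = ∑ k ∈ Finset.range n, (f k)^2 := by
  rw [sum_range_fin (fun k => sg N k * f k)]
  apply Finset.sum_congr rfl
  intro k _
  rw [mul_pow, sg_sq, one_mul]

lemma Cp_spec (n N : ℕ) (hN : 3 ≤ N) (hn : N < n) :
    0 < qmin (Cp n N) ∧ ∀ g : ℕ → ℝ,
      qmin (Cp n N) * ∑ k ∈ Finset.range n, (g k)^2 ≤ FF n N g := by
  have : Nonempty (Fin n) := ⟨⟨0, by omega⟩⟩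
  obtain ⟨⟨x, hx0, hx⟩, hmin⟩ := qmin_spec (Cp n N)
  constructor
  · have hq := QF_eig _ _ _ hx
    have hpos := sumsq_pos x hx0
    have hnn := QF_nonneg (Cp n N) x
    set f : ℕ → ℝ := fun k => sg N k * ext0 x k with hf
    have hxf : x = fun i : Fin n => sg N i * f i := by
      ext i
      simp only [hf, ext0_val]
      rw [← mul_assoc, ← sq, sg_sq, one_mul]
    rcases lt_trichotomy (qmin (Cp n N)) 0 with h | h | h
    · nlinarith
    · exfalso
      rw [h, zero_mul, hxf, QF_Cp n N hN hn] at hq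
      have hs : 0 ≤ ∑ j ∈ Finset.Ico 3 n, (f j - f (par N j))^2 :=
        Finset.sum_nonneg fun _ _ => sq_nonneg _
      unfold FF at hq
      have a1 := sq_nonneg (f 0 + f 1)
      have a2 := sq_nonneg (f 2 - f 0)
      have a3 := sq_nonneg (f 2 - f 1)
      have b1 : f 0 + f 1 = 0 := pow_eq_zero_iff (two_ne_zero) |>.1 (by linarith)
      have b2 : f 2 - f 0 = 0 := pow_eq_zero_iff (two_ne_zero) |>.1 (by linarith)
      have b3 : f 2 - f 1 = 0 := pow_eq_zero_iff (two_ne_zero) |>.1 (by linarith)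
      have b4 : ∑ j ∈ Finset.Ico 3 n, (f j - f (par N j))^2 = 0 := by linarith
      have b5 := (Finset.sum_eq_zero_iff_of_nonneg (fun _ _ => sq_nonneg _)).1 b4
      have hz : ∀ k, k < n → f k = 0 := by
        intro k
        induction k using Nat.strong_induction_on with
        | _ k ih =>
          intro hk
          by_cases h3 : 3 ≤ k
          · have := b5 k (Finset.mem_Ico.2 ⟨h3, hk⟩)
            have h4 : f k - f (par N k) = 0 := by simpa using this
            rw [ih (par N k) (by unfold par; omega) (by unfold par; omega)] at h4
            linarith
          · rcases (by omega : k = 0 ∨ k = 1 ∨ k = 2) with rfl | rfl | rfl <;> linarith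
      apply hx0
      rw [hxf]
      ext i
      simp [hz i i.2]
    · exact h
  · intro g
    have := hmin (fun i => sg N i * g i)
    rwa [QF_Cp n N hN hn, sg_sum] at this

/-! ### Finding the core -/

/-- `K` is connected in `G`, in terms of cuts. -/
def CC {V : Type*} (G : SimpleGraph V) (K : Finset V) : Prop :=
  ∀ S : Set V, (∃ i ∈ K, i ∈ S) → (∃ i ∈ K, i ∉ S) → ∃ i ∈ K, ∃ j ∈ K, i ∈ S ∧ j ∉ S ∧ G.Adj i j

/-- `K` induces a nonbipartite subgraph. -/
def NB {V : Type*} (G : SimpleGraph V) (K : Finset V) : Prop :=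
  ∀ s : V → ZMod 2, ∃ u ∈ K, ∃ v ∈ K, G.Adj u v ∧ s u = s v

lemma CC_super {V : Type*} (G : SimpleGraph V) (K L : Finset V) (hKL : K ⊆ L) (hK : CC G K)
    (hd : ∀ v ∈ L, v ∈ K ∨ ∃ d ∈ K, G.Adj d v) (hne : K.Nonempty) : CC G L := by
  intro S h1 h2
  by_cases a1 : ∃ i ∈ K, i ∈ S
  · by_cases a2 : ∃ i ∈ K, i ∉ S
    · obtain ⟨i, hi, j, hj, h⟩ := hK S a1 a2
      exact ⟨i, hKL hi, j, hKL hj, h⟩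
    · push Not at a2
      obtain ⟨j, hj, hjS⟩ := h2
      rcases hd j hj with h | ⟨d, hdK, h⟩
      · exact absurd (a2 j h) hjS
      · exact ⟨d, hKL hdK, j, hj, a2 d hdK, hjS, h⟩
  · push Not at a1
    obtain ⟨j, hj, hjS⟩ := h1
    rcases hd j hj with h | ⟨d, hdK, h⟩
    · exact absurd hjS (a1 j h)
    · exact ⟨j, hj, d, hKL hdK, hjS, a1 d hdK, h.symm⟩

lemma CC_insert {V : Type*} (G : SimpleGraph V) (K : Finset V) (hK : CC G K) (a b : V)
    (ha : a ∈ K) (hab : b ∈ K ∨ G.Adj a b) : CC G (insert b K) := by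
  apply CC_super G K _ (Finset.subset_insert _ _) hK _ ⟨a, ha⟩
  intro v hv
  rcases Finset.mem_insert.1 hv with rfl | h
  · rcases hab with h | h
    · exact Or.inl h
    · exact Or.inr ⟨a, ha, h⟩
  · exact Or.inl h

lemma NB_mono {V : Type*} (G : SimpleGraph V) (K L : Finset V) (hKL : K ⊆ L) (hK : NB G K) :
    NB G L := by
  intro s
  obtain ⟨u, hu, v, hv, h⟩ := hK s
  exact ⟨u, hKL hu, v, hKL hv, h⟩

lemma conn_cut {V : Type*} (G : SimpleGraph V) (hG : G.Connected) (S : Set V) (a b : V)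
    (ha : a ∈ S) (hb : b ∉ S) : ∃ i j, i ∈ S ∧ j ∉ S ∧ G.Adj i j := by
  obtain ⟨w⟩ := hG.preconnected a b
  obtain ⟨d, _, h1, h2⟩ := w.exists_boundary_dart S ha hb
  exact ⟨d.fst, d.snd, h1, h2, d.adj⟩

lemma grow {V : Type*} (G : SimpleGraph V) (hG : G.Connected) (D : Finset V)
    (c : V → V) (hcD : ∀ v, c v ∈ D) (hc : ∀ v, c v = v ∨ G.Adj (c v) v)
    (hcc : ∀ v ∈ D, c v = v) (m : ℕ) (hm : 1 ≤ m) (hmD : m ≤ D.card) :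
    ∃ S K : Finset V, S ⊆ D ∧ S.card = m ∧ S ⊆ K ∧ K.card + 2 ≤ 3 * m ∧ CC G K := by
  induction m, hm using Nat.le_induction with
  | base =>
    obtain ⟨d, hd⟩ := Finset.card_pos.1 (by omega : 0 < D.card)
    refine ⟨{d}, {d}, by simpa using hd, by simp, le_rfl, by simp, ?_⟩
    rintro S ⟨i, hi, hiS⟩ ⟨j, hj, hjS⟩
    rw [Finset.mem_singleton] at hi hj
    subst hi; subst hj
    exact absurd hiS hjS
  | succ m hm ih =>
    obtain ⟨S, K, hSD, hSm, hSK, hKc, hK⟩ := ih (by omega)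
    obtain ⟨s, hs⟩ := Finset.card_pos.1 (by omega : 0 < S.card)
    obtain ⟨d, hd, hdS⟩ : ∃ d ∈ D, d ∉ S := by
      by_contra hcon
      push Not at hcon
      have := Finset.card_le_card (show D ⊆ S from hcon)
      omega
    obtain ⟨a, b, ha, hb, hab⟩ := conn_cut G hG {v | c v ∈ S} s d
      (by change c s ∈ S; rwa [hcc s (hSD hs)]) (by change ¬ c d ∈ S; rwa [hcc d hd])
    change c a ∈ S at ha
    change ¬ c b ∈ S at hb
    refine ⟨insert (c b) S, insert (c b) (insert b (insert a K)), ?_, ?_, ?_, ?_, ?_⟩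
    · exact Finset.insert_subset (hcD b) hSD
    · rw [Finset.card_insert_of_notMem hb, hSm]
    · apply Finset.insert_subset_insert
      exact hSK.trans ((Finset.subset_insert _ _).trans (Finset.subset_insert _ _))
    · have h1 := Finset.card_insert_le (c b) (insert b (insert a K))
      have h2 := Finset.card_insert_le b (insert a K)
      have h3 := Finset.card_insert_le a K
      omega
    · have k1 : CC G (insert a K) := by
        apply CC_insert G K hK (c a) a (hSK ha)
        rcases hc a with h | h
        · left; rw [← h]; exact hSK ha
        · exact Or.inr h
      have k2 : CC G (insert b (insert a K)) :=
        CC_insert G _ k1 a b (Finset.mem_insert_self _ _) (Or.inr hab)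
      apply CC_insert G _ k2 b (c b) (Finset.mem_insert_self _ _)
      rcases hc b with h | h
      · left; rw [h]; exact Finset.mem_insert_self _ _
      · exact Or.inr h.symm

lemma z2a : ∀ a b c d : ZMod 2, a ≠ b → c ≠ d → (a = c ↔ b = d) := by decide
lemma z2b : ∀ a b c d : ZMod 2, (a = c ↔ b = d) → c = d → a = b := by decide
lemma z2c : ∀ a : ZMod 2, a ≠ a + 1 := by decide

lemma exists_core {V : Type*} [Fintype V] (G : SimpleGraph V) (hG : G.Connected)
    (hnb : ¬ G.Colorable 2) (D : Finset V) (hD : IsDominatingSet G D) (hD1 : 1 ≤ D.card)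
    (hcard : 3 * D.card ≤ Fintype.card V) :
    ∃ K : Finset V, D ⊆ K ∧ K.card = 3 * D.card ∧ CC G K ∧ NB G K := by
  have hex : ∀ v, ∃ c, c ∈ D ∧ (c = v ∨ G.Adj c v) ∧ (v ∈ D → c = v) := by
    intro v
    by_cases hv : v ∈ D
    · exact ⟨v, hv, Or.inl rfl, fun _ => rfl⟩
    · obtain ⟨u, hu, h⟩ := hD v hv
      exact ⟨u, hu, Or.inr h, fun h => absurd h hv⟩
  choose c hcD hc hcc using hex
  obtain ⟨S, K0, hSD, hSc, hSK, hK0c, hK0⟩ := grow G hG D c hcD hc hcc D.card hD1 le_rfl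
  have hSDe : S = D := Finset.eq_of_subset_of_card_le hSD hSc.ge
  subst hSDe
  have hNBG : ∀ s : V → ZMod 2, ∃ u v, G.Adj u v ∧ s u = s v := by
    intro s
    by_contra hcon
    push Not at hcon
    exact hnb ⟨(SimpleGraph.Coloring.mk s (fun {u v} h => hcon u v h) : G.Coloring (ZMod 2))⟩
  have hK1 : ∃ K1 : Finset V, K0 ⊆ K1 ∧ K1.card ≤ K0.card + 2 ∧ CC G K1 ∧ NB G K1 := by
    by_cases hNB : NB G K0
    · exact ⟨K0, le_rfl, by omega, hK0, hNB⟩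
    unfold NB at hNB
    push Not at hNB
    obtain ⟨s, hs⟩ := hNB
    set s' : V → ZMod 2 := fun v => if v ∈ K0 then s v else s (c v) + 1 with hs'
    obtain ⟨u, v, huv, hsuv⟩ := hNBG s'
    have hcK : ∀ w, c w ∈ K0 := fun w => hSK (hcD w)
    have hor : ∀ w, w ∈ K0 ∨ G.Adj (c w) w := by
      intro w
      rcases hc w with h | h
      · left; rw [← h]; exact hcK w
      · exact Or.inr h
    refine ⟨insert u (insert v K0), ?_, ?_, ?_, ?_⟩
    · exact (Finset.subset_insert _ _).trans (Finset.subset_insert _ _)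
    · have h1 := Finset.card_insert_le u (insert v K0)
      have h2 := Finset.card_insert_le v K0
      omega
    · have k1 : CC G (insert v K0) := CC_insert G K0 hK0 (c v) v (hcK v) (hor v)
      apply CC_insert G _ k1 (c u) u (Finset.mem_insert_of_mem (hcK u))
      rcases hor u with h | h
      · exact Or.inl (Finset.mem_insert_of_mem h)
      · exact Or.inr h
    · intro t
      by_contra hcon
      push Not at hcon
      set K1 := insert u (insert v K0) with hK1
      have hsub : ∀ w ∈ K0, w ∈ K1 := fun w hw =>
        Finset.mem_insert_of_mem (Finset.mem_insert_of_mem hw)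
      have huK : u ∈ K1 := Finset.mem_insert_self _ _
      have hvK : v ∈ K1 := Finset.mem_insert_of_mem (Finset.mem_insert_self _ _)
      -- agreement is constant on the old core
      have hconst : ∀ i ∈ K0, ∀ j ∈ K0, (t i = s i ↔ t j = s j) := by
        have : ∀ i ∈ K0, ∀ j ∈ K0, t i = s i → t j = s j := by
          intro i hi j hj h
          by_contra hj'
          obtain ⟨a, ha, b, hb, haS, hbS, hab⟩ := hK0 {w | t w = s w} ⟨i, hi, h⟩ ⟨j, hj, hj'⟩
          have h1 := hcon a (hsub a ha) b (hsub b hb) hab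
          have h2 := hs a ha b hb hab
          exact hbS ((z2a _ _ _ _ h1 h2).1 haS)
        exact fun i hi j hj => ⟨this i hi j hj, this j hj i hi⟩
      have hext : ∀ w ∈ K1, (t w = s' w ↔ t (c w) = s (c w)) := by
        intro w hw
        by_cases hwK : w ∈ K0
        · simp only [hs', if_pos hwK]
          exact hconst w hwK _ (hcK w)
        · simp only [hs', if_neg hwK]
          have hadj := (hor w).resolve_left hwK
          have h1 := hcon (c w) (hsub _ (hcK w)) w hw hadj
          exact (z2a _ _ _ _ h1 (z2c (s (c w)))).symm
      have h1 : t u = s' u ↔ t v = s' v :=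
        (hext u huK).trans ((hconst _ (hcK u) _ (hcK v)).trans (hext v hvK).symm)
      exact hcon u huK v hvK huv (z2b _ _ _ _ h1 hsuv)
  obtain ⟨K1, hK01, hK1c, hCC, hNB⟩ := hK1
  obtain ⟨K, hK1K, hKc⟩ := Finset.exists_superset_card_eq (s := K1) (n := 3 * S.card)
    (by omega) hcard
  refine ⟨K, hSK.trans (hK01.trans hK1K), hKc, ?_, NB_mono G K1 K hK1K hNB⟩
  apply CC_super G K1 K hK1K hCC
  · intro v _
    rcases hc v with h | h
    · left; rw [← h]; exact hK01 (hSK (hcD v))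
    · exact Or.inr ⟨c v, hK01 (hSK (hcD v)), h⟩
  · obtain ⟨d, hd⟩ := Finset.card_pos.1 hD1
    exact ⟨d, hK01 (hSK hd)⟩

lemma exists_bad {V : Type*} [Fintype V] (G : SimpleGraph V) (K : Finset V) (hCC : CC G K)
    (hNB : NB G K) (x : V → ℝ) :
    ∃ u ∈ K, ∃ v ∈ K, G.Adj u v ∧ 0 ≤ x u * x v ∧
      ∀ S : Set V, (∃ i ∈ K, i ∈ S) → (∃ i ∈ K, i ∉ S) →
        ∃ i ∈ K, ∃ j ∈ K, i ∈ S ∧ j ∉ S ∧ G.Adj i j ∧ s(i, j) ≠ s(u, v) := by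
  by_contra hcon
  push Not at hcon
  set s : V → ZMod 2 := fun v => if 0 ≤ x v then 1 else 0 with hs
  have hss : ∀ u v, s u = s v → 0 ≤ x u * x v := by
    intro u v h
    simp only [hs] at h
    split_ifs at h with h1 h2 h2
    · exact mul_nonneg h1 h2
    · exact absurd h (by decide)
    · exact absurd h (by decide)
    · exact mul_nonneg_of_nonpos_of_nonpos (not_le.1 h1).le (not_le.1 h2).le
  set M : Finset (Sym2 V) := Finset.univ.filter
    (fun e => ∃ u v, e = s(u, v) ∧ u ∈ K ∧ v ∈ K ∧ G.Adj u v ∧ s u = s v) with hM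
  have hcut : ∀ e : Sym2 V, ∃ S : Set V, e ∈ M → (∃ i ∈ K, i ∈ S) ∧ (∃ i ∈ K, i ∉ S) ∧
      ∀ i ∈ K, ∀ j ∈ K, i ∈ S → j ∉ S → G.Adj i j → s(i, j) = e := by
    intro e
    by_cases he : e ∈ M
    · obtain ⟨u, v, rfl, hu, hv, hadj, hsuv⟩ := (Finset.mem_filter.1 he).2
      obtain ⟨S, h1, h2, h3⟩ := hcon u hu v hv hadj (hss u v hsuv)
      exact ⟨S, fun _ => ⟨h1, h2, h3⟩⟩
    · exact ⟨∅, fun h => absurd h he⟩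
  choose C hC using hcut
  set ind : Sym2 V → V → ZMod 2 := fun e w => if w ∈ C e then 1 else 0 with hind
  obtain ⟨a, ha, b, hb, hab, hsab⟩ := hNB (fun w => s w + ∑ e ∈ M, ind e w)
  have hoff : ∀ e ∈ M, e ≠ s(a, b) → ind e a = ind e b := by
    intro e he hne
    have h3 := (hC e he).2.2
    by_cases h1 : a ∈ C e <;> by_cases h2 : b ∈ C e
    · simp [hind, h1, h2]
    · exact absurd (h3 a ha b hb h1 h2 hab).symm hne
    · exact absurd ((h3 b hb a ha h2 h1 hab.symm).symm.trans Sym2.eq_swap) hne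
    · simp [hind, h1, h2]
  by_cases hin : s(a, b) ∈ M
  · have hsab' : s a = s b := by
      obtain ⟨u, v, he, hu, hv, hadj, hsuv⟩ := (Finset.mem_filter.1 hin).2
      rcases Sym2.eq_iff.1 he with ⟨rfl, rfl⟩ | ⟨rfl, rfl⟩
      · exact hsuv
      · exact hsuv.symm
    rw [← Finset.add_sum_erase M _ hin, ← Finset.add_sum_erase M _ hin, hsab',
      Finset.sum_congr rfl (fun e he => hoff e (Finset.mem_of_mem_erase he)
        (Finset.ne_of_mem_erase he))] at hsab
    have heq : ind s(a, b) a = ind s(a, b) b := by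
      have := add_left_cancel hsab
      exact add_right_cancel this
    obtain ⟨h1, h2, h3⟩ := hC _ hin
    obtain ⟨i, hi, j, hj, hiS, hjS, hij⟩ := hCC _ h1 h2
    have := h3 i hi j hj hiS hjS hij
    rcases Sym2.eq_iff.1 this with ⟨rfl, rfl⟩ | ⟨rfl, rfl⟩
    · simp [hind, hiS, hjS] at heq
    · simp [hind, hiS, hjS] at heq
  · rw [Finset.sum_congr rfl (fun e he => hoff e he (fun h => hin (h ▸ he)))] at hsab
    exact hin (Finset.mem_filter.2 ⟨Finset.mem_univ _, a, b, rfl, ha, hb, hab,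
      add_right_cancel hsab⟩)

lemma sort_equiv {V : Type*} [Fintype V] (K : Finset V) (n N : ℕ) (hn : Fintype.card V = n)
    (hK : K.card = N) (y : V → ℝ) :
    ∃ e : V ≃ Fin n, (∀ v, v ∈ K ↔ (e v).val < N) ∧
      ∀ i j : Fin n, i ≤ j → j.val < N → y (e.symm i) ≤ y (e.symm j) := by
  have hNn : N ≤ n := by rw [← hK, ← hn]; exact Finset.card_le_univ K
  let e0 : K ≃ Fin N := K.equivFinOfCardEq hK
  let f : Fin N → ℝ := fun i => y (e0.symm i)
  let eK : {v // v ∈ K} ≃ Fin N := e0.trans (Tuple.sort f).symm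
  have hmono : Monotone (fun i => y (eK.symm i)) := Tuple.monotone_sort f
  have hcc : Fintype.card {v // ¬ v ∈ K} = n - N := by
    rw [Fintype.card_subtype_compl, hn]
    simp [hK]
  let eC : {v // ¬ v ∈ K} ≃ Fin (n - N) := Fintype.equivFinOfCardEq hcc
  let e : V ≃ Fin n := ((Equiv.sumCompl (fun v => v ∈ K)).symm.trans
    (Equiv.sumCongr eK eC)).trans (finSumFinEquiv.trans (finCongr (by omega)))
  have h1 : ∀ v (hv : v ∈ K), (e v).val = (eK ⟨v, hv⟩).val := by
    intro v hv
    simp [e, Equiv.sumCompl_symm_apply_of_pos hv]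
  have h2 : ∀ v (hv : v ∉ K), (e v).val = N + (eC ⟨v, hv⟩).val := by
    intro v hv
    simp [e, Equiv.sumCompl_symm_apply_of_neg hv]
  have hiff : ∀ v, v ∈ K ↔ (e v).val < N := by
    intro v
    constructor
    · intro hv
      rw [h1 v hv]
      exact (eK ⟨v, hv⟩).2
    · intro h
      by_contra hv
      rw [h2 v hv] at h
      omega
  refine ⟨e, hiff, ?_⟩
  intro i j hij hj
  have key : ∀ (i : Fin n) (hi : i.val < N), y (e.symm i) = y (eK.symm ⟨i.val, hi⟩) := by
    intro i hi
    congr 1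
    rw [Equiv.symm_apply_eq]
    apply Fin.ext
    rw [h1 _ (eK.symm ⟨i.val, hi⟩).2]
    simp
  rw [key i (lt_of_le_of_lt hij hj), key j hj]
  exact hmono hij

/-- The permutation of the extremal graph. -/
def perm3 (k : ℕ) : ℕ := if k = 0 then 1 else if k = 1 then 2 else if k = 2 then 0 else k

/-- The inverse permutation. -/
def perInv (k : ℕ) : ℕ := if k = 1 then 0 else if k = 2 then 1 else if k = 0 then 2 else k

lemma perm3_cases (k : ℕ) : (k = 0 ∧ perm3 k = 1) ∨ (k = 1 ∧ perm3 k = 2) ∨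
    (k = 2 ∧ perm3 k = 0) ∨ (3 ≤ k ∧ perm3 k = k) := by
  unfold perm3
  split_ifs with h1 h2 h3
  · exact Or.inl ⟨h1, rfl⟩
  · exact Or.inr (Or.inl ⟨h2, rfl⟩)
  · exact Or.inr (Or.inr (Or.inl ⟨h3, rfl⟩))
  · exact Or.inr (Or.inr (Or.inr ⟨by omega, rfl⟩))

lemma perInv_cases (k : ℕ) : (k = 1 ∧ perInv k = 0) ∨ (k = 2 ∧ perInv k = 1) ∨
    (k = 0 ∧ perInv k = 2) ∨ (3 ≤ k ∧ perInv k = k) := by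
  unfold perInv
  split_ifs with h1 h2 h3
  · exact Or.inl ⟨h1, rfl⟩
  · exact Or.inr (Or.inl ⟨h2, rfl⟩)
  · exact Or.inr (Or.inr (Or.inl ⟨h3, rfl⟩))
  · exact Or.inr (Or.inr (Or.inr ⟨by omega, rfl⟩))

lemma perInv_perm3 (k : ℕ) : perInv (perm3 k) = k := by
  have h1 := perm3_cases k
  have h2 := perInv_cases (perm3 k)
  omega

lemma perm3_perInv (k : ℕ) : perm3 (perInv k) = k := by
  have h1 := perInv_cases k
  have h2 := perm3_cases (perInv k)
  omega

set_option maxHeartbeats 4000000 in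
lemma cstarRel_perm3 (γ i j : ℕ) (hγ : 1 ≤ γ) (hij : i < j) :
    (cstarRel 3 (3 * γ - 3) (perm3 i) (perm3 j) ∨ cstarRel 3 (3 * γ - 3) (perm3 j) (perm3 i)) ↔
      (j ≤ 2 ∨ (3 ≤ j ∧ i = par (3 * γ) j)) := by
  have hp : par (3 * γ) j = min (j - 1) (3 * γ - 1) := rfl
  rw [hp]
  unfold cstarRel
  by_cases hg : γ = 1
  · subst hg
    simp only [show 3 * 1 - 3 = 0 from rfl, if_true]
    rcases perm3_cases i with ⟨h1, h2⟩ | ⟨h1, h2⟩ | ⟨h1, h2⟩ | ⟨h1, h2⟩ <;>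
    rcases perm3_cases j with ⟨h3, h4⟩ | ⟨h3, h4⟩ | ⟨h3, h4⟩ | ⟨h3, h4⟩ <;>
    (rw [h2, h4]; norm_num; try omega)
  · rw [if_neg (by omega : ¬ 3 * γ - 3 = 0)]
    rcases perm3_cases i with ⟨h1, h2⟩ | ⟨h1, h2⟩ | ⟨h1, h2⟩ | ⟨h1, h2⟩ <;>
    rcases perm3_cases j with ⟨h3, h4⟩ | ⟨h3, h4⟩ | ⟨h3, h4⟩ | ⟨h3, h4⟩ <;>
    (rw [h2, h4]; norm_num; try omega)

lemma Cp_iso (n γ : ℕ) (hγ : 1 ≤ γ) (hn : 3 * γ < n) :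
    Nonempty (Cp n (3 * γ) ≃g Cstar n 3 (3 * γ - 3)) := by
  let e : Fin n ≃ Fin n :=
    { toFun := fun k => ⟨perm3 k, by have := k.2; have := perm3_cases k; omega⟩
      invFun := fun k => ⟨perInv k, by have := k.2; have := perInv_cases k; omega⟩
      left_inv := by
        intro k; apply Fin.ext; exact perInv_perm3 k.val
      right_inv := by
        intro k; apply Fin.ext; exact perm3_perInv k.val }
  have hlt : ∀ a b : Fin n, a.val < b.val →
      ((Cstar n 3 (3 * γ - 3)).Adj (e a) (e b) ↔ (Cp n (3 * γ)).Adj a b) := by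
    intro a b hab
    rw [Cp_adj_lt n _ a b hab]
    unfold Cstar
    rw [SimpleGraph.fromRel_adj]
    have hne : e a ≠ e b := fun h => by
      have := e.injective h
      rw [this] at hab; exact lt_irrefl _ hab
    simp only [ne_eq, hne, not_false_eq_true, true_and]
    exact cstarRel_perm3 γ a.val b.val hγ hab
  refine ⟨⟨e, ?_⟩⟩
  intro a b
  rcases lt_trichotomy a.val b.val with h | h | h
  · exact hlt a b h
  · have : a = b := Fin.ext h
    subst this
    simp
  · rw [SimpleGraph.adj_comm, (Cp n (3*γ)).adj_comm]
    exact hlt b a h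

/-- The key comparison on labelled graphs. -/
lemma key_fin (n N : ℕ) (hN : 3 ≤ N) (hn : N < n) (G : SimpleGraph (Fin n)) (X : ℕ → ℝ)
    (u v : ℕ) (huv : u < v) (hv : v < N) (hA : natAdj G u v) (hbad : 0 ≤ X u * X v)
    (hmono : ∀ i j, i ≤ j → j < N → |X i| ≤ |X j|)
    (hcut : ∀ S : Set ℕ, (∃ i < N, i ∈ S) → (∃ i < N, i ∉ S) →
      ∃ i j, i < j ∧ j < N ∧ natAdj G i j ∧ (i ∈ S ↔ j ∉ S) ∧ (i, j) ≠ (u, v))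
    (c : ℕ → ℕ) (hc : ∀ j, N ≤ j → j < n → c j < N ∧ natAdj G (c j) j)
    (q : ℝ) (hq : QF G (fun i => X i) = q * ∑ k ∈ Finset.range n, (X k)^2)
    (hpos : 0 < ∑ k ∈ Finset.range n, (X k)^2) :
    qmin (Cp n N) ≤ q ∧ (qmin (Cp n N) = q → G = Cp n N) := by
  obtain ⟨hb1, hb2⟩ := main_bound n N hN hn (natAdj G) X u v huv hv hA hbad hmono hcut c hc
  obtain ⟨hμ, hmin⟩ := Cp_spec n N hN hn
  set μ := qmin (Cp n N) with hμd
  rw [← QF_fin, hq] at hb1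
  rw [← QF_fin, hq] at hb2
  set f := tr N X c with hf
  have hfX : ∀ j < n, |X j| ≤ f j := by
    intro j hj
    rw [hf]
    unfold tr
    split_ifs with h
    · exact le_rfl
    · have h1 := (hc j (by omega) hj).1
      have h2 := hmono (c j) (N - 1) (by omega) (by omega)
      have h3 := le_max_left (|X j| - |X (c j)|) 0
      linarith
  have hf0 : ∀ j, 0 ≤ f j := by
    intro j
    rw [hf]
    unfold tr
    split_ifs with h
    · exact abs_nonneg _
    · exact add_nonneg (abs_nonneg _) (le_max_right _ _)
  have hle : ∀ k ∈ Finset.range n, (X k)^2 ≤ (f k)^2 := by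
    intro k hk
    rw [← sq_abs (X k)]
    exact pow_le_pow_left₀ (abs_nonneg _) (hfX k (Finset.mem_range.1 hk)) 2
  have hsum := Finset.sum_le_sum hle
  have hm := hmin f
  have hms := mul_le_mul_of_nonneg_left hsum hμ.le
  constructor
  · by_contra hlt
    push Not at hlt
    have := mul_lt_mul_of_pos_right hlt hpos
    linarith
  · intro heq
    rw [← heq] at hb1 hb2
    have hse : ∑ k ∈ Finset.range n, (X k)^2 = ∑ k ∈ Finset.range n, (f k)^2 := by
      apply le_antisymm hsum
      exact le_of_mul_le_mul_left (hm.trans hb1) hμ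
    have hFf : FF n N f = μ * ∑ k ∈ Finset.range n, (f k)^2 := by
      apply le_antisymm _ hm
      rw [← hse]; exact hb1
    have hpt := (Finset.sum_eq_sum_iff_of_le hle).1 hse
    have htr : ∀ j < n, f j = |X j| := by
      intro j hj
      have h := hpt j (Finset.mem_range.2 hj)
      rw [← abs_of_nonneg (hf0 j)]
      exact ((sq_eq_sq_iff_abs_eq_abs _ _).1 h).symm
    have hfm : ∀ i j, i ≤ j → j < N → f i ≤ f j := by
      intro i j hij hj
      rw [htr i (by omega), htr j (by omega)]
      exact hmono i j hij hj
    have hpend : ∀ j, N ≤ j → j < n → f (N-1) ≤ f j := by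
      intro j hj hjn
      rw [htr (N-1) (by omega), hf]
      unfold tr
      rw [if_neg (by omega)]
      linarith [le_max_right (|X j| - |X (c j)|) 0]
    have hne : ∃ k < n, f k ≠ 0 := by
      by_contra hcon
      push Not at hcon
      have : ∑ k ∈ Finset.range n, (f k)^2 = 0 :=
        Finset.sum_eq_zero (fun k hk => by rw [hcon k (Finset.mem_range.1 hk)]; norm_num)
      rw [hse, this] at hpos
      exact lt_irrefl _ hpos
    obtain ⟨s1, s2, s3, s4⟩ := FF_strict n N hN hn μ hμ f hmin hFf hf0 hfm hpend hne
    have hpar : ∀ j, 3 ≤ j → j < n → par N j < n := by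
      intro j h1 h2
      have : par N j = min (j - 1) (N - 1) := rfl
      omega
    rw [htr 0 (by omega), htr 1 (by omega)] at s1
    rw [htr 0 (by omega)] at s2
    rw [htr 1 (by omega), htr 2 (by omega)] at s3
    have hfin := hb2 htr s1 s2 s3 (fun j h1 h2 => by
      rw [← htr j h2, ← htr _ (hpar j h1 h2)]; exact s4 j h1 h2) (by rw [hFf, hse])
    have hlt : ∀ a b : Fin n, a.val < b.val → (G.Adj a b ↔ (Cp n N).Adj a b) := by
      intro a b hab
      rw [Cp_adj_lt n N a b hab, ← natAdj_val]
      exact hfin a.val b.val hab b.2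
    ext a b
    rcases lt_trichotomy a.val b.val with h | h | h
    · exact hlt a b h
    · have : a = b := Fin.ext h
      subst this
      simp
    · rw [G.adj_comm, (Cp n N).adj_comm]
      exact hlt b a h

lemma key_graph {V : Type*} [Fintype V] (γ n : ℕ) (hγ : 1 ≤ γ) (hn : 3 * γ < n)
    (G : SimpleGraph V) (hcard : Fintype.card V = n)
    (hconn : G.Connected) (hnonbip : ¬ G.Colorable 2)
    (hdom : dominationNumber G = γ) :
    qmin (Cp n (3 * γ)) ≤ qmin G ∧
      (qmin (Cp n (3 * γ)) = qmin G → Nonempty (G ≃g Cp n (3 * γ))) := by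
  have hne : Nonempty V := hconn.nonempty
  obtain ⟨D, hD, hDc⟩ : ∃ D : Finset V, IsDominatingSet G D ∧ D.card = γ := by
    have h := Nat.sInf_mem (s := {k | ∃ D : Finset V, IsDominatingSet G D ∧ D.card = k})
      ⟨_, Finset.univ, fun v hv => absurd (Finset.mem_univ v) hv, rfl⟩
    unfold dominationNumber at hdom
    rw [hdom] at h
    exact h
  obtain ⟨K, hDK, hKc, hCC, hNB⟩ := exists_core G hconn hnonbip D hD (by omega) (by omega)
  rw [hDc] at hKc
  obtain ⟨⟨x, hx0, hx⟩, -⟩ := qmin_spec G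
  obtain ⟨u, hu, v, hv, huv, hbad, hcut⟩ := exists_bad G K hCC hNB x
  obtain ⟨e, heK, hemono⟩ := sort_equiv K n (3 * γ) hcard hKc (fun w => |x w|)
  set N := 3 * γ with hNd
  let G' : SimpleGraph (Fin n) := G.comap e.symm
  let iso : G' ≃g G := SimpleGraph.Iso.comap e.symm G
  let X : ℕ → ℝ := ext0 (x ∘ e.symm)
  have hXe : ∀ w, X (e w).val = x w := by
    intro w
    simp only [X, ext0_val, Function.comp, Equiv.symm_apply_apply]
  have hXf : ∀ i : Fin n, X i.val = x (e.symm i) := by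
    intro i
    simp only [X, ext0_val, Function.comp]
  have hadj : ∀ a b, G.Adj a b → natAdj G' (e a).val (e b).val := by
    intro a b hab
    rw [natAdj_val]
    change G.Adj (e.symm (e a)) (e.symm (e b))
    simpa using hab
  have hsum : ∑ k ∈ Finset.range n, (X k)^2 = ∑ w, (x w)^2 := by
    rw [← sum_range_fin]
    rw [← Equiv.sum_comp e]
    simp only [hXe]
  have hq : QF G' (fun i => X i) = qmin G * ∑ k ∈ Finset.range n, (X k)^2 := by
    have h1 := eig_iso iso.symm x (qmin G) hx
    have h2 : (fun i : Fin n => X i) = x ∘ iso.symm.symm := by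
      funext i
      exact hXf i
    rw [h2, QF_eig _ _ _ h1, ← sum_range_fin]
    congr 1
    apply Finset.sum_congr rfl
    intro i _
    rw [← h2]
  have hmono : ∀ i j, i ≤ j → j < N → |X i| ≤ |X j| := by
    intro i j hij hj
    have := hemono ⟨i, by omega⟩ ⟨j, by omega⟩ hij hj
    simp only [← hXf] at this
    exact this
  have hc : ∀ j, ∃ c, N ≤ j → j < n → c < N ∧ natAdj G' c j := by
    intro j
    by_cases hj : N ≤ j ∧ j < n
    · have hjK : e.symm ⟨j, hj.2⟩ ∉ K := by
        rw [heK]; simpa using hj.1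
      obtain ⟨d, hd, hda⟩ := hD (e.symm ⟨j, hj.2⟩) (fun h => hjK (hDK h))
      refine ⟨(e d).val, fun _ _ => ⟨(heK d).1 (hDK hd), ?_⟩⟩
      have := hadj _ _ hda
      simpa using this
    · exact ⟨0, fun h1 h2 => absurd ⟨h1, h2⟩ hj⟩
  choose c hc using hc
  have hcut' : ∀ S : Set ℕ, (∃ i < N, i ∈ S) → (∃ i < N, i ∉ S) →
      ∃ i j, i ∈ K ∧ j ∈ K ∧ G.Adj i j ∧ ((e i).val ∈ S ↔ (e j).val ∉ S) ∧ (e i).val < (e j).val ∧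
        s(i, j) ≠ s(u, v) := by
    rintro S ⟨i, hi, hiS⟩ ⟨j, hj, hjS⟩
    obtain ⟨a, ha, b, hb, haS, hbS, hab, hne⟩ := hcut {w | (e w).val ∈ S}
      ⟨e.symm ⟨i, by omega⟩, by rw [heK]; simpa using hi, by simpa using hiS⟩
      ⟨e.symm ⟨j, by omega⟩, by rw [heK]; simpa using hj, by simpa using hjS⟩
    have haS' : (e a).val ∈ S := haS
    have hbS' : (e b).val ∉ S := hbS
    rcases lt_trichotomy (e a).val (e b).val with h | h | h
    · exact ⟨a, b, ha, hb, hab, by tauto, h, hne⟩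
    · exact absurd (h ▸ haS') hbS'
    · exact ⟨b, a, hb, ha, hab.symm, by tauto, h, by rwa [Sym2.eq_swap]⟩
  have hpos : 0 < ∑ k ∈ Finset.range n, (X k)^2 := by
    rw [hsum]; exact sumsq_pos x hx0
  have main : ∀ u v : V, u ∈ K → v ∈ K → G.Adj u v → 0 ≤ x u * x v → (e u).val < (e v).val →
      (∀ S : Set ℕ, (∃ i < N, i ∈ S) → (∃ i < N, i ∉ S) →
      ∃ i j, i ∈ K ∧ j ∈ K ∧ G.Adj i j ∧ ((e i).val ∈ S ↔ (e j).val ∉ S) ∧ (e i).val < (e j).val ∧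
        s(i, j) ≠ s(u, v)) →
      qmin (Cp n N) ≤ qmin G ∧ (qmin (Cp n N) = qmin G → G' = Cp n N) := by
    intro u v hu hv huv hbad hlt hcut
    apply key_fin n N (by omega) hn G' X (e u).val (e v).val hlt ((heK v).1 hv) (hadj u v huv)
      (by rw [hXe, hXe]; exact hbad) hmono _ c hc (qmin G) hq hpos
    intro S h1 h2
    obtain ⟨i, j, hi, hj, hij, hS, hl, hne⟩ := hcut S h1 h2
    refine ⟨(e i).val, (e j).val, hl, (heK j).1 hj, hadj i j hij, hS, ?_⟩
    intro h
    apply hne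
    have h3 := e.injective (Fin.ext (Prod.mk.inj h).1)
    have h4 := e.injective (Fin.ext (Prod.mk.inj h).2)
    rw [h3, h4]
  have hfin : qmin (Cp n N) ≤ qmin G ∧ (qmin (Cp n N) = qmin G → G' = Cp n N) := by
    rcases lt_trichotomy (e u).val (e v).val with h | h | h
    · exact main u v hu hv huv hbad h hcut'
    · exact absurd (e.injective (Fin.ext h)) huv.ne
    · apply main v u hv hu huv.symm (by rwa [mul_comm]) h
      intro S h1 h2
      rw [Sym2.eq_swap]
      exact hcut' S h1 h2
  refine ⟨hfin.1, fun h => ?_⟩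
  have hG := hfin.2 h
  rw [← hG]
  exact ⟨iso.symm⟩

/-- For `n ≥ 3γ + 2` (`γ ≥ 1`), among all connected nonbipartite graphs of order `n`
with domination number `γ`, the least `Q`-eigenvalue is minimized uniquely by
`C*_{3,3γ-3}`. -/
theorem qmin_Cstar_min_large
    {V : Type*} [Fintype V] (γ n : ℕ) (hγ : 1 ≤ γ) (hn : 3 * γ + 2 ≤ n)
    (G : SimpleGraph V) (hcard : Fintype.card V = n)
    (hconn : G.Connected) (hnonbip : ¬ G.Colorable 2)
    (hdom : dominationNumber G = γ) :
    qmin (Cstar n 3 (3 * γ - 3)) ≤ qmin G ∧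
      (qmin (Cstar n 3 (3 * γ - 3)) = qmin G ↔ Nonempty (G ≃g Cstar n 3 (3 * γ - 3))) := by
  obtain ⟨f⟩ := Cp_iso n γ hγ (by omega)
  obtain ⟨h1, h2⟩ := key_graph γ n hγ (by omega) G hcard hconn hnonbip hdom
  rw [← qmin_iso f]
  refine ⟨h1, fun h => ?_, fun ⟨g⟩ => ?_⟩
  · obtain ⟨g⟩ := h2 h
    exact ⟨g.trans f⟩
  · rw [qmin_iso f, qmin_iso g]
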